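/- For every odd integer k ≥ 7 there exists a constant m₀ (depending on k) such that every graph H with no isolated vertices and with e(H) ≥ m₀ edges satisfies R(C_k, H) ≤ 2·e(H) + (k−1)/2. -/

import Mathlib

/-- `G` has a copy in `C`: there is an injective graph homomorphism from `G` to `C`,
i.e. `C` contains `G` as a (not necessarily induced) subgraph. -/
def HasCopy {α β : Type*} (G : SimpleGraph α) (C : SimpleGraph β) : Prop :=
  ∃ f : G →g C, Function.Injective f

/-- The Ramsey number `R(G, H)`: the least `N` such that every red-blue colouring of the
edges of `K_N` (encoded by the graph `C` of red edges) contains a red copy of `G` or a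
blue copy of `H`. -/
noncomputable def ramseyNumber {α β : Type*} (G : SimpleGraph α) (H : SimpleGraph β) : ℕ :=
  sInf {N : ℕ | ∀ C : SimpleGraph (Fin N), HasCopy G C ∨ HasCopy H Cᶜ}

/-!
Let `k = 2l + 1`, let `G` be a red graph without `k`-cycles, and call the edges of its complement
blue. Any set of neighbours of a vertex, and as `k` is odd any set of second neighbours, contains
an independent set of a fixed proportion of its size.

First let `H` be connected. If `G` is sparse, a subset of its vertices that minimizes a suitable
cost has an independent set four times as large as its maximum degree; the vertices of `H` of
largest degree are placed there and the others are embedded greedily in decreasing order of degree.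
If `G` is dense, call an edge strong if it lies in a copy of `K_{k,k}` in `G`; by the
Kővári–Sós–Turán theorem almost all edges are strong. Paths through a `K_{k,k}` have any small odd
length, so a strong edge lies on no triangle, and strong neighbourhoods and strong second
neighbourhoods are independent. If `H` is almost a tree, it has a small separator that leaves only
small components; the separator goes to a strong neighbourhood that has no red edges to half of
`G`, and the components are placed in that half one after another. Otherwise `H` has
`(1 + ε) |V(H)|` edges, so there is room to discard the second neighbourhood of a vertex of largest
strong degree: its neighbourhood `I` hosts the vertices of `H` of large degree, and only few red
edges are left between `I` and the rest.

In general, one large component makes up for the losses in all others. If there is none, components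
are small enough to be placed in independent sets one after another, which suffices unless almost
all of them are single edges. In that case a maximal blue matching misses a red clique, and as no
exchange of two vertices enlarges it, all but one vertex of the clique are joined in red to many
vertices of the matching, which gives a red `k`-cycle.
-/

open Finset SimpleGraph

section Classical

open scoped Classical

section Paths

variable {α β : Type*} {G : SimpleGraph α} {k : ℕ} {Q : Finset α} {v : α}

/-- The neighbours of `v` inside the finite set `S`; its cardinality is the degree of `v` into
`S`. -/
noncomputable def nbrsIn (G : SimpleGraph α) (v : α) (S : Finset α) : Finset α :=
  {x ∈ S | G.Adj v x}

theorem mem_nbrsIn {x : α} {S : Finset α} : x ∈ nbrsIn G v S ↔ x ∈ S ∧ G.Adj v x := by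
  simp [nbrsIn]

theorem nbrsIn_subset {S : Finset α} : nbrsIn G v S ⊆ S :=
  filter_subset _ _

theorem nbrsIn_mono {S T : Finset α} (h : S ⊆ T) : nbrsIn G v S ⊆ nbrsIn G v T :=
  filter_subset_filter _ h

theorem not_adj_of_isPath_of_cycleGraph_free (hk : 3 ≤ k) (hG : (cycleGraph k).Free G) {a b : α}
    {p : G.Walk a b} (hp : p.IsPath) (hlen : p.length + 1 = k) : ¬ G.Adj b a := by
  refine fun hba => hG ((cycleGraph_isContained_iff hk).2 ⟨b, p.cons hba, ?_, by simpa⟩)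
  refine (Walk.cons_isCycle_iff p hba).2 ⟨hp, fun he => ?_⟩
  have := hp.length_eq_one_of_mem_edges (Sym2.eq_swap ▸ he)
  omega

theorem exists_isPath_of_le_card_nbrsIn {d : ℕ} (hd : ∀ v ∈ Q, d ≤ #(nbrsIn G v Q)) (n : ℕ)
    {a : α} (ha : a ∈ Q) {F : Finset α} (haF : a ∉ F) (hn : n + #F ≤ d) :
    ∃ (b : α) (p : G.Walk a b), p.IsPath ∧ p.length = n ∧ (∀ x ∈ p.support, x ∈ Q) ∧
      ∀ x ∈ p.support, x ∉ F := by
  induction n generalizing a F with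
  | zero => exact ⟨a, .nil, .nil, rfl, by simpa, by simpa⟩
  | succ n ih =>
    obtain ⟨b, hb, hbF⟩ : ∃ b ∈ nbrsIn G a Q, b ∉ F :=
      exists_mem_notMem_of_card_lt_card (by have := hd a ha; omega)
    obtain ⟨hbQ, hab⟩ := mem_nbrsIn.1 hb
    obtain ⟨c, p, hp, hlen, hpQ, hpF⟩ := ih hbQ (F := insert a F) (by simp [hbF, hab.ne'])
      (by rw [card_insert_of_notMem haF]; omega)
    simp only [mem_insert, not_or] at hpF
    refine ⟨c, p.cons hab, hp.cons fun h => (hpF a h).1 rfl, by simp [hlen], ?_, ?_⟩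
    · simpa [ha] using hpQ
    · simpa [haF] using fun x hx => (hpF x hx).2

theorem apply_eq_of_even_length {f : α → β}
    (hf : ∀ x ∈ Q, ∀ y ∈ Q, ∀ z ∈ Q, G.Adj y x → G.Adj y z → f x = f z) (n : ℕ) {a b : α}
    (p : G.Walk a b) (hlen : p.length = 2 * n) (hp : ∀ x ∈ p.support, x ∈ Q) : f a = f b := by
  induction n generalizing a with
  | zero => rw [Walk.eq_of_length_eq_zero hlen]
  | succ n ih =>
    match p with
    | .cons h (.cons h' q) =>
      simp only [Walk.support_cons, List.forall_mem_cons] at hp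
      obtain ⟨ha, hb, hq⟩ := hp
      rw [hf _ ha _ hb _ (hq _ q.start_mem_support) h.symm h',
        ih q (by simp only [Walk.length_cons] at hlen; omega) hq]

theorem apply_eq_of_forall_adj {f : α → β} (hf : ∀ x ∈ Q, ∀ y ∈ Q, G.Adj x y → f x = f y) {a b : α}
    (p : G.Walk a b) (hp : ∀ x ∈ p.support, x ∈ Q) : f a = f b := by
  induction p with
  | nil => rfl
  | cons h q ih =>
    simp only [Walk.support_cons, List.forall_mem_cons] at hp
    rw [hf _ hp.1 _ (hp.2 _ q.start_mem_support) h, ih hp.2]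

end Paths

section SecondNeighborhood

variable {α : Type*} {G : SimpleGraph α} {k : ℕ} {Q : Finset α} {v : α} {p : α → α}

-- A path of length `k - 4` in `Q` whose ends have different parents closes up to a `k`-cycle
-- through the parents and `v`.
theorem parent_eq_of_isPath (hk : 4 ≤ k) (hG : (cycleGraph k).Free G)
    (hvQ : v ∉ Q) (hQ : ∀ x ∈ Q, ¬ G.Adj v x) (hp : ∀ x ∈ Q, G.Adj v (p x) ∧ G.Adj (p x) x)
    {a b : α} {w : G.Walk a b} (hw : w.IsPath) (hlen : w.length + 4 = k)
    (hwQ : ∀ x ∈ w.support, x ∈ Q) : p a = p b := by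
  by_contra hne
  obtain ⟨hva, haa⟩ := hp a (hwQ a w.start_mem_support)
  obtain ⟨hvb, hbb⟩ := hp b (hwQ b w.end_mem_support)
  have hpb : (w.concat hbb.symm).IsPath := hw.concat (fun h => hQ _ (hwQ _ h) hvb) _
  have hv : ((w.concat hbb.symm).concat hvb.symm).IsPath :=
    hpb.concat (by simp [Walk.support_concat, hvb.ne, mt (hwQ v) hvQ]) _
  have hpaw : p a ∉ w.support := fun h => hQ _ (hwQ _ h) hva
  have hpa : (((w.concat hbb.symm).concat hvb.symm).concat hva).IsPath :=
    hv.concat (by simp [Walk.support_concat, hva.ne', hne, hpaw]) _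
  exact not_adj_of_isPath_of_cycleGraph_free (by omega) hG hpa
    (by simp only [Walk.length_concat]; omega) haa

theorem parent_eq_of_common_neighbor (hk : 6 ≤ k) (hG : (cycleGraph k).Free G)
    (hvQ : v ∉ Q) (hQ : ∀ x ∈ Q, ¬ G.Adj v x) (hp : ∀ x ∈ Q, G.Adj v (p x) ∧ G.Adj (p x) x)
    (hd : ∀ x ∈ Q, k ≤ #(nbrsIn G x Q)) {x y z : α} (hx : x ∈ Q) (hy : y ∈ Q) (hz : z ∈ Q)
    (hyx : G.Adj y x) (hyz : G.Adj y z) : p x = p z := by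
  obtain ⟨b, w, hw, hlen, hwQ, hwF⟩ := exists_isPath_of_le_card_nbrsIn hd (k - 5) hy
    (F := {x, z}) (by simp [hyx.ne, hyz.ne]) (by have := card_le_two (a := x) (b := z); omega)
  have parent_eq_end : ∀ u ∈ Q, u ∉ w.support → G.Adj y u → p u = p b := fun u hu huw hyu =>
    parent_eq_of_isPath (by omega) hG hvQ hQ hp (hw.cons huw (h := hyu.symm))
      (by simp only [Walk.length_cons]; omega) (by simpa [hu] using hwQ)
  rw [parent_eq_end x hx (fun h => hwF x h (by simp)) hyx,
    parent_eq_end z hz (fun h => hwF z h (by simp)) hyz]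

-- A path of odd length `k - 4` from `x`, preceded by the edge `yx`, is a walk of even length.
theorem parent_eq_of_adj (hk : 6 ≤ k) (hodd : Odd k) (hG : (cycleGraph k).Free G)
    (hvQ : v ∉ Q) (hQ : ∀ x ∈ Q, ¬ G.Adj v x) (hp : ∀ x ∈ Q, G.Adj v (p x) ∧ G.Adj (p x) x)
    (hd : ∀ x ∈ Q, k ≤ #(nbrsIn G x Q)) {x y : α} (hx : x ∈ Q) (hy : y ∈ Q) (hxy : G.Adj x y) :
    p x = p y := by
  obtain ⟨b, w, hw, hlen, hwQ, -⟩ := exists_isPath_of_le_card_nbrsIn hd (k - 4) hx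
    (F := ∅) (by simp) (by simp)
  obtain ⟨j, rfl⟩ := hodd
  have hyb : p y = p b := apply_eq_of_even_length
    (fun _ hx _ hy _ hz => parent_eq_of_common_neighbor hk hG hvQ hQ hp hd hx hy hz) (j - 1)
    (w.cons hxy.symm) (by simp only [Walk.length_cons]; omega) (by simpa [hy] using hwQ)
  rw [hyb, parent_eq_of_isPath (by omega) hG hvQ hQ hp hw (by omega) hwQ]

theorem exists_card_nbrsIn_lt_of_parent (hk : 6 ≤ k) (hodd : Odd k) (hG : (cycleGraph k).Free G)
    (hvQ : v ∉ Q) (hQ : ∀ x ∈ Q, ¬ G.Adj v x) (hp : ∀ x ∈ Q, G.Adj v (p x) ∧ G.Adj (p x) x)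
    (hne : Q.Nonempty) : ∃ x ∈ Q, #(nbrsIn G x Q) < k := by
  by_contra! hd
  obtain ⟨a, ha⟩ := hne
  obtain ⟨b, w, hw, hlen, hwQ, -⟩ := exists_isPath_of_le_card_nbrsIn hd (k - 2) ha
    (F := ∅) (by simp) (by simp)
  obtain ⟨hvb, hbb⟩ := hp b (hwQ b w.end_mem_support)
  have hab : p a = p b := apply_eq_of_forall_adj
    (fun _ hx _ hy => parent_eq_of_adj hk hodd hG hvQ hQ hp hd hx hy) w hwQ
  refine not_adj_of_isPath_of_cycleGraph_free (by omega) hG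
    (hw.concat (fun h => hQ _ (hwQ _ h) hvb) hbb.symm)
    (by simp only [Walk.length_concat]; omega) ?_
  exact hab ▸ (hp a ha).2

end SecondNeighborhood

section IndependentSets

variable {α : Type*} {G : SimpleGraph α} {k : ℕ} {Q : Finset α} {v : α}

theorem isIndepSet_insert_of_disjoint_nbrsIn {I S : Finset α} (hI : G.IsIndepSet (I : Set α))
    (hIS : I ⊆ S \ nbrsIn G v S) : G.IsIndepSet (insert v I : Finset α) := by
  have hv : ∀ x ∈ I, ¬ G.Adj v x := fun x hx hvx => by
    have := mem_sdiff.1 (hIS hx)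
    exact this.2 (mem_nbrsIn.2 ⟨this.1, hvx⟩)
  rw [coe_insert]
  exact hI.insert fun x hx _ => ⟨hv x hx, fun h => hv x hx h.symm⟩

theorem exists_isIndepSet_of_degenerate {d : ℕ}
    (hd : ∀ Q' ⊆ Q, Q'.Nonempty → ∃ v ∈ Q', #(nbrsIn G v Q') < d) :
    ∃ I ⊆ Q, G.IsIndepSet (I : Set α) ∧ #Q ≤ d * #I := by
  induction Q using Finset.strongInduction with
  | H Q ih =>
    rcases Q.eq_empty_or_nonempty with rfl | hQ
    · exact ⟨∅, by simp, by simp, by simp⟩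
    obtain ⟨v, hv, hvd⟩ := hd Q subset_rfl hQ
    set R := Q \ insert v (nbrsIn G v Q) with hR
    have hRQ : R ⊆ Q := sdiff_subset
    have hvR : v ∉ R := by simp [hR]
    obtain ⟨I, hIR, hI, hcard⟩ :=
      ih R ⟨hRQ, fun h => hvR (h hv)⟩ fun Q' hQ' => hd Q' (hQ'.trans hRQ)
    refine ⟨insert v I, insert_subset hv (hIR.trans hRQ), isIndepSet_insert_of_disjoint_nbrsIn hI
      (hIR.trans (sdiff_subset_sdiff subset_rfl (subset_insert _ _))), ?_⟩
    rw [card_insert_of_notMem (mt (@hIR v) hvR)]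
    calc #Q ≤ #(insert v (nbrsIn G v Q)) + #R := by
          rw [hR]
          have := le_card_sdiff (insert v (nbrsIn G v Q)) Q
          omega
      _ ≤ d + d * #I := add_le_add ((card_insert_le _ _).trans hvd) hcard
      _ = d * (#I + 1) := by ring

theorem exists_isIndepSet_of_forall_adj (hk : 3 ≤ k) (hG : (cycleGraph k).Free G)
    (hQ : ∀ x ∈ Q, G.Adj v x) : ∃ I ⊆ Q, G.IsIndepSet (I : Set α) ∧ #Q ≤ k * #I := by
  refine exists_isIndepSet_of_degenerate fun Q' hQ' ⟨a, ha⟩ => ?_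
  by_contra! hd
  obtain ⟨b, p, hp, hlen, hpQ, -⟩ := exists_isPath_of_le_card_nbrsIn hd (k - 2) ha
    (F := ∅) (by simp) (by simp)
  have hv : v ∉ p.support := fun hv => (hQ v (hQ' (hpQ v hv))).ne rfl
  exact not_adj_of_isPath_of_cycleGraph_free hk hG
    (hp.concat hv (hQ b (hQ' (hpQ b p.end_mem_support))).symm)
    (by simp only [Walk.length_concat]; omega) (hQ a (hQ' ha))

theorem exists_isIndepSet_of_forall_common_neighbor (hk : 6 ≤ k) (hodd : Odd k)
    (hG : (cycleGraph k).Free G) (hvQ : v ∉ Q) (hQ : ∀ x ∈ Q, ¬ G.Adj v x)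
    (hcommon : ∀ x ∈ Q, ∃ y, G.Adj v y ∧ G.Adj y x) :
    ∃ I ⊆ Q, G.IsIndepSet (I : Set α) ∧ #Q ≤ k * #I := by
  have : ∀ x, ∃ y, x ∈ Q → G.Adj v y ∧ G.Adj y x := fun x => by
    by_cases hx : x ∈ Q
    · exact (hcommon x hx).imp fun _ h _ => h
    · exact ⟨x, fun h => absurd h hx⟩
  choose p hp using this
  exact exists_isIndepSet_of_degenerate fun Q' hQ' hne =>
    exists_card_nbrsIn_lt_of_parent hk hodd hG (mt (@hQ' v) hvQ) (fun x hx => hQ x (hQ' hx))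
      (fun x hx => hp x (hQ' hx)) hne

theorem exists_isIndepSet_card_eq (hk : 3 ≤ k) (hG : (cycleGraph k).Free G) {r : ℕ}
    (hQ : k * r ^ 2 ≤ #Q) : ∃ I ⊆ Q, G.IsIndepSet (I : Set α) ∧ #I = r := by
  suffices h : ∃ I ⊆ Q, G.IsIndepSet (I : Set α) ∧ r ≤ #I by
    obtain ⟨I, hIQ, hI, hr⟩ := h
    obtain ⟨J, hJI, hJ⟩ := exists_subset_card_eq hr
    exact ⟨J, hJI.trans hIQ, hI.mono (coe_subset.2 hJI), hJ⟩
  rcases Nat.eq_zero_or_pos r with rfl | hr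
  · exact ⟨∅, by simp, by simp, by simp⟩
  by_cases h : ∃ v ∈ Q, k * r ≤ #(nbrsIn G v Q)
  · obtain ⟨v, -, hv⟩ := h
    obtain ⟨I, hIv, hI, hcard⟩ := exists_isIndepSet_of_forall_adj hk hG (v := v)
      (Q := nbrsIn G v Q) fun x hx => (mem_nbrsIn.1 hx).2
    have hr : r ≤ #I := Nat.le_of_mul_le_mul_left (hv.trans hcard) (by omega)
    exact ⟨I, hIv.trans nbrsIn_subset, hI, hr⟩
  · push Not at h
    obtain ⟨I, hIQ, hI, hcard⟩ := exists_isIndepSet_of_degenerate (G := G) (Q := Q) (d := k * r)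
      fun Q' hQ' ⟨v, hv⟩ => ⟨v, hv, (card_le_card (nbrsIn_mono hQ')).trans_lt (h v (hQ' hv))⟩
    refine ⟨I, hIQ, hI, Nat.le_of_mul_le_mul_left (c := k * r) ?_ (by positivity)⟩
    calc k * r * r = k * r ^ 2 := by ring
      _ ≤ k * r * #I := hQ.trans hcard

end IndependentSets

section BlueEmbeddings

variable {V α : Type*} {H : SimpleGraph V} {G : SimpleGraph α} {W W' : Finset α}
  {L : V → Finset α} {J S T : Finset V} {f g : V → α}

/-- Regarding `G` as the red graph, `f` embeds `H[S]` in the blue graph on `W` in such a way that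
no vertex `u ∈ S` is placed on its list `L u` of forbidden vertices. -/
structure IsBlueEmbedding (H : SimpleGraph V) (G : SimpleGraph α) (W : Finset α)
    (L : V → Finset α) (S : Finset V) (f : V → α) : Prop where
  mem : ∀ u ∈ S, f u ∈ W
  notMem : ∀ u ∈ S, f u ∉ L u
  injOn : Set.InjOn f S
  not_adj : ∀ u ∈ S, ∀ v ∈ S, H.Adj u v → ¬ G.Adj (f u) (f v)

/-- Regarding `G` as the red graph, the blue graph on `W` contains a copy of `H[J]`. -/
def BlueEmbeds (H : SimpleGraph V) (G : SimpleGraph α) (J : Finset V) (W : Finset α) : Prop :=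
  ∃ f, IsBlueEmbedding H G W (fun _ => ∅) J f

/-- List version of `BlueEmbeds`: `H[J]` embeds into the blue part of `W` even if each vertex of `J`
has to avoid a prescribed set of at most `d` vertices. -/
def BlueListEmbeds (H : SimpleGraph V) (G : SimpleGraph α) (J : Finset V) (W : Finset α)
    (d : ℕ) : Prop :=
  ∀ L : V → Finset α, (∀ u ∈ J, #(L u) ≤ d) → ∃ f, IsBlueEmbedding H G W L J f

namespace IsBlueEmbedding

theorem empty : IsBlueEmbedding H G W L ∅ f where
  mem := by simp
  notMem := by simp
  injOn := by simp
  not_adj := by simp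

theorem mono (hf : IsBlueEmbedding H G W L S f) (hW : W ⊆ W') : IsBlueEmbedding H G W' L S f :=
  { hf with mem := fun u hu => hW (hf.mem u hu) }

theorem blueEmbeds (hf : IsBlueEmbedding H G W L S f) : BlueEmbeds H G S W :=
  ⟨f, { hf with notMem := by simp }⟩

theorem congr (hf : IsBlueEmbedding H G W L S f) (hfg : ∀ u ∈ S, g u = f u) :
    IsBlueEmbedding H G W L S g where
  mem u hu := hfg u hu ▸ hf.mem u hu
  notMem u hu := hfg u hu ▸ hf.notMem u hu
  injOn := hf.injOn.congr fun u hu => (hfg u hu).symm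
  not_adj u hu v hv := by rw [hfg u hu, hfg v hv]; exact hf.not_adj u hu v hv

theorem union (hS : IsBlueEmbedding H G W L S f) (hT : IsBlueEmbedding H G W L T f)
    (hne : ∀ u ∈ S, ∀ v ∈ T, f u ≠ f v) (hadj : ∀ u ∈ S, ∀ v ∈ T, H.Adj u v → ¬ G.Adj (f u) (f v)) :
    IsBlueEmbedding H G W L (S ∪ T) f where
  mem u hu := (mem_union.1 hu).elim (hS.mem u) (hT.mem u)
  notMem u hu := (mem_union.1 hu).elim (hS.notMem u) (hT.notMem u)
  injOn u hu v hv huv := by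
    rcases mem_union.1 hu with hu | hu <;> rcases mem_union.1 hv with hv | hv
    · exact hS.injOn hu hv huv
    · exact absurd huv (hne u hu v hv)
    · exact absurd huv.symm (hne v hv u hu)
    · exact hT.injOn hu hv huv
  not_adj u hu v hv huv := by
    rcases mem_union.1 hu with hu | hu <;> rcases mem_union.1 hv with hv | hv
    · exact hS.not_adj u hu v hv huv
    · exact hadj u hu v hv huv
    · exact fun h => hadj v hv u hu huv.symm h.symm
    · exact hT.not_adj u hu v hv huv

theorem piecewise (hS : IsBlueEmbedding H G W L S f) (hT : IsBlueEmbedding H G W L T g)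
    (hST : Disjoint S T) (hne : ∀ u ∈ S, ∀ v ∈ T, f u ≠ g v)
    (hadj : ∀ u ∈ S, ∀ v ∈ T, H.Adj u v → ¬ G.Adj (f u) (g v)) :
    IsBlueEmbedding H G W L (S ∪ T) (S.piecewise f g) := by
  have hf : ∀ u ∈ S, S.piecewise f g u = f u := fun u hu => piecewise_eq_of_mem S f g hu
  have hg : ∀ u ∈ T, S.piecewise f g u = g u := fun u hu =>
    piecewise_eq_of_notMem S f g (disjoint_right.1 hST hu)
  refine (hS.congr hf).union (hT.congr hg) (fun u hu v hv => ?_) fun u hu v hv => ?_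
  · rw [hf u hu, hg v hv]; exact hne u hu v hv
  · rw [hf u hu, hg v hv]; exact hadj u hu v hv

theorem singleton {u : V} {x : α} (hxW : x ∈ W) (hxL : x ∉ L u) :
    IsBlueEmbedding H G W L {u} fun _ => x where
  mem := by simpa
  notMem := by simpa
  injOn := by simp
  not_adj := by simp

theorem exists_insert (hf : IsBlueEmbedding H G W L S f) {Δ : ℕ}
    (hΔ : ∀ x ∈ W, #(nbrsIn G x W) ≤ Δ) {u : V} (hu : u ∉ S)
    (hcard : #(nbrsIn H u S) * Δ + #S + #(L u) < #W) :
    ∃ g, IsBlueEmbedding H G W L (insert u S) g := by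
  set B : Finset α := (nbrsIn H u S).biUnion fun w => nbrsIn G (f w) W
  have hBcard : #B ≤ #(nbrsIn H u S) * Δ :=
    card_biUnion_le_card_mul _ _ _ fun w hw => hΔ _ (hf.mem w (nbrsIn_subset hw))
  obtain ⟨x, hxW, hx⟩ : ∃ x ∈ W, x ∉ B ∪ S.image f ∪ L u := by
    refine exists_mem_notMem_of_card_lt_card ?_
    have := card_union_le (B ∪ S.image f) (L u)
    have := card_union_le B (S.image f)
    have := card_image_le (s := S) (f := f)
    omega
  simp only [mem_union, not_or] at hx
  obtain ⟨⟨hxB, hxS⟩, hxL⟩ := hx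
  refine ⟨S.piecewise f fun _ => x, ?_⟩
  rw [insert_eq, union_comm]
  refine hf.piecewise (singleton hxW hxL) (by simpa) ?_ ?_
  · exact fun w hw v _ h => hxS (mem_image.2 ⟨w, hw, h⟩)
  · intro w hw v hv hwv hwx
    rw [mem_singleton.1 hv] at hwv
    exact hxB (mem_biUnion.2 ⟨w, mem_nbrsIn.2 ⟨hw, hwv.symm⟩, mem_nbrsIn.2 ⟨hxW, hwx⟩⟩)

-- The remaining vertices are embedded in decreasing order of their degree in `H[J]`.
theorem exists_greedy (hf : IsBlueEmbedding H G W L S f) {Δ : ℕ}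
    (hΔ : ∀ x ∈ W, #(nbrsIn G x W) ≤ Δ) (hSJ : S ⊆ J)
    (htop : ∀ s ∈ S, ∀ u ∈ J \ S, #(nbrsIn H u J) ≤ #(nbrsIn H s J))
    (hcard : ∀ T, S ⊆ T → T ⊆ J → ∀ u ∈ J \ T,
      (∀ s ∈ T, #(nbrsIn H u J) ≤ #(nbrsIn H s J)) →
      #(nbrsIn H u J) * Δ + #T + #(L u) < #W) :
    ∃ g, IsBlueEmbedding H G W L J g := by
  induction hq : #(J \ S) generalizing S f with
  | zero =>
    rw [card_eq_zero, sdiff_eq_empty_iff_subset] at hq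
    exact ⟨f, hSJ.antisymm hq ▸ hf⟩
  | succ q ih =>
    obtain ⟨u, hu, hmax⟩ := exists_max_image (J \ S) (fun u => #(nbrsIn H u J))
      (card_pos.1 (by omega))
    obtain ⟨huJ, huS⟩ := mem_sdiff.1 hu
    have hbound := hcard S subset_rfl hSJ u hu fun s hs => htop s hs u hu
    have hdeg : #(nbrsIn H u S) * Δ ≤ #(nbrsIn H u J) * Δ :=
      Nat.mul_le_mul_right _ (card_le_card (nbrsIn_mono hSJ))
    obtain ⟨g, hg⟩ := hf.exists_insert hΔ huS (by omega)
    refine ih hg (insert_subset huJ hSJ) ?_ (fun T hT => hcard T ((subset_insert _ _).trans hT)) ?_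
    · intro s hs w hw
      have hwS : w ∈ J \ S := sdiff_subset_sdiff subset_rfl (subset_insert _ _) hw
      exact (mem_insert.1 hs).elim (fun h => h ▸ hmax w hwS) fun hs => htop s hs w hwS
    · rw [sdiff_insert, card_erase_of_mem hu]
      omega

end IsBlueEmbedding

theorem BlueEmbeds.mono (h : BlueEmbeds H G J W) (hW : W ⊆ W') : BlueEmbeds H G J W' :=
  h.imp fun _ hf => hf.mono hW

theorem BlueListEmbeds.blueEmbeds {c : ℕ} (h : BlueListEmbeds H G J W c) : BlueEmbeds H G J W :=
  h (fun _ => ∅) (by simp)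

theorem nbrsIn_eq_empty_of_isIndepSet {I : Finset α} (hI : G.IsIndepSet (I : Set α)) {x : α}
    (hx : x ∈ I) : nbrsIn G x I = ∅ :=
  filter_eq_empty_iff.2 fun _ hy hxy => hI hx hy hxy.ne hxy

theorem exists_isBlueEmbedding_of_isIndepSet [Nonempty α] {I : Finset α}
    (hI : G.IsIndepSet (I : Set α)) {c : ℕ} (hL : ∀ u ∈ S, #(L u) ≤ c)
    (hcard : #S + c ≤ #I) : ∃ f, IsBlueEmbedding H G I L S f := by
  refine IsBlueEmbedding.empty (f := fun _ => Classical.arbitrary α) |>.exists_greedy (Δ := 0)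
    (fun x hx => by simp [nbrsIn_eq_empty_of_isIndepSet hI hx]) (empty_subset S) (by simp) ?_
  intro T _ hT u hu _
  obtain ⟨huS, huT⟩ := mem_sdiff.1 hu
  have := card_lt_card ((ssubset_iff_of_subset hT).2 ⟨u, huS, huT⟩)
  have := hL u huS
  omega

theorem blueEmbeds_of_isIndepSet [Nonempty α] {I : Finset α} (hI : G.IsIndepSet (I : Set α))
    (hcard : #S ≤ #I) : BlueEmbeds H G S I :=
  exists_isBlueEmbedding_of_isIndepSet hI (c := 0) (by simp) (by simpa)

theorem exists_subset_card_eq_forall_le (d : V → ℕ) {s : ℕ} (hs : s ≤ #J) :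
    ∃ S ⊆ J, #S = s ∧ ∀ a ∈ S, ∀ u ∈ J \ S, d u ≤ d a := by
  induction s with
  | zero => exact ⟨∅, by simp, by simp, by simp⟩
  | succ s ih =>
    obtain ⟨S, hSJ, hS, htop⟩ := ih (by omega)
    obtain ⟨u, hu, hmax⟩ := exists_max_image (J \ S) d
      (card_pos.1 (by rw [card_sdiff_of_subset hSJ]; omega))
    obtain ⟨huJ, huS⟩ := mem_sdiff.1 hu
    refine ⟨insert u S, insert_subset huJ hSJ, by rw [card_insert_of_notMem huS, hS], ?_⟩
    intro a ha w hw
    have hwS : w ∈ J \ S := sdiff_subset_sdiff subset_rfl (subset_insert _ _) hw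
    exact (mem_insert.1 ha).elim (fun h => h ▸ hmax w hwS) fun ha => htop a ha w hwS

theorem IsBlueEmbedding.exists_union_of_forall_not_adj [Nonempty α] {k : ℕ} (hk : 3 ≤ k)
    (hG : (cycleGraph k).Free G) (hf : IsBlueEmbedding H G W L S f) (hST : Disjoint S T)
    (hadj : ∀ u ∈ S, ∀ v ∈ T, ¬ H.Adj u v) {r c : ℕ} (hT : #T ≤ r) (hL : ∀ u ∈ T, #(L u) ≤ c)
    (hcard : #S + r * c + k * r ^ 2 ≤ #W) : ∃ g, IsBlueEmbedding H G W L (S ∪ T) g := by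
  have hlists : #(T.biUnion L) ≤ r * c :=
    (card_biUnion_le_card_mul T L c hL).trans (Nat.mul_le_mul_right _ hT)
  obtain ⟨I, hIW, hI, hIr⟩ := exists_isIndepSet_card_eq (r := r)
      (Q := W \ (T.biUnion L ∪ S.image f)) hk hG (by
    have := le_card_sdiff (T.biUnion L ∪ S.image f) W
    have := card_union_le (T.biUnion L) (S.image f)
    have := card_image_le (s := S) (f := f)
    omega)
  obtain ⟨g, hg⟩ := blueEmbeds_of_isIndepSet (H := H) (S := T) hI (hIr.symm ▸ hT)
  simp only [subset_iff, mem_sdiff, mem_union, mem_biUnion, mem_image, not_or, not_exists,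
    not_and] at hIW
  refine ⟨S.piecewise f g, hf.piecewise ?_ hST ?_ ?_⟩
  · exact { hg with
      mem := fun w hw => (hIW (hg.mem w hw)).1
      notMem := fun w hw => (hIW (hg.mem w hw)).2.1 w hw }
  · exact fun w hw v hv => (hIW (hg.mem v hv)).2.2 w hw
  · exact fun w hw v hv hwv => absurd hwv (hadj w hw v hv)

theorem exists_isBlueEmbedding_of_label_classes [Nonempty α] {k : ℕ} (hk : 3 ≤ k)
    (hG : (cycleGraph k).Free G) {ι : Type*} {label : V → ι} {r c : ℕ}
    (hlabel : ∀ u ∈ J, ∀ v ∈ J, H.Adj u v → label u = label v)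
    (hclass : ∀ u ∈ J, #{v ∈ J | label v = label u} ≤ r) (hL : ∀ u ∈ J, #(L u) ≤ c)
    (hcard : #J + r * c + k * r ^ 2 ≤ #W) : ∃ f, IsBlueEmbedding H G W L J f := by
  induction J using Finset.strongInduction with
  | H J ih =>
    rcases J.eq_empty_or_nonempty with rfl | ⟨u, hu⟩
    · exact ⟨fun _ => Classical.arbitrary α, .empty⟩
    set C : Finset V := {v ∈ J | label v = label u} with hC
    have hCJ : C ⊆ J := filter_subset _ _
    have hrest : J \ C ⊆ J := sdiff_subset
    have hcardJ := card_sdiff_add_card_eq_card hCJ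
    obtain ⟨f, hf⟩ := ih (J \ C) (sdiff_ssubset hCJ ⟨u, by simp [hC, hu]⟩)
      (fun u hu v hv => hlabel u (hrest hu) v (hrest hv))
      (fun u hu => (card_le_card (filter_subset_filter _ hrest)).trans (hclass u (hrest hu)))
      (fun u hu => hL u (hrest hu)) (by omega)
    have hadj : ∀ w ∈ J \ C, ∀ v ∈ C, ¬ H.Adj w v := fun w hw v hv hwv =>
      (mem_sdiff.1 hw).2 (mem_filter.2 ⟨hrest hw,
        (hlabel w (hrest hw) v (hCJ hv) hwv).trans (mem_filter.1 hv).2⟩)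
    rw [← sdiff_union_of_subset hCJ]
    exact hf.exists_union_of_forall_not_adj hk hG sdiff_disjoint hadj (hclass u hu)
      (fun w hw => hL w (hCJ hw)) (by omega)

end BlueEmbeddings

section DegreeSums

variable {V : Type*} {H : SimpleGraph V} {J K P : Finset V} {v : V}

/-- The sum of the degrees of the induced subgraph `H[J]`, that is, twice its number of edges. -/
noncomputable def degSum (H : SimpleGraph V) (J : Finset V) : ℕ :=
  ∑ u ∈ J, #(nbrsIn H u J)

theorem degSum_mono (h : J ⊆ K) : degSum H J ≤ degSum H K :=
  (sum_le_sum fun _ _ => card_le_card (nbrsIn_mono h)).trans (sum_le_sum_of_subset h)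

theorem card_nbrsIn_erase_add {u : V} (hv : v ∈ J) :
    #(nbrsIn H u (J.erase v)) + (if H.Adj u v then 1 else 0) = #(nbrsIn H u J) := by
  simp only [nbrsIn, card_filter]
  exact sum_erase_add _ _ hv

theorem sum_erase_ite_adj : ∑ u ∈ J.erase v, (if H.Adj u v then 1 else 0) = #(nbrsIn H v J) := by
  rw [sum_erase _ (by simp), nbrsIn, card_filter]
  simp only [H.adj_comm]

theorem degSum_erase_add (hv : v ∈ J) :
    degSum H (J.erase v) + 2 * #(nbrsIn H v J) = degSum H J := by
  have hrest : ∑ u ∈ J.erase v, #(nbrsIn H u J) = degSum H (J.erase v) + #(nbrsIn H v J) := by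
    rw [degSum, ← sum_erase_ite_adj, ← sum_add_distrib]
    exact sum_congr rfl fun u _ => (card_nbrsIn_erase_add hv).symm
  rw [degSum.eq_1 H J, ← sum_erase_add _ _ hv, hrest]
  ring

theorem exists_degSum_erase_mul_sq_le {j : ℕ} (hj : #J = j + 1) :
    ∃ v ∈ J, degSum H (J.erase v) * (j + 1) ^ 2 ≤ degSum H J * j ^ 2 := by
  obtain ⟨v, hv, hmax⟩ := exists_max_image J (fun u => #(nbrsIn H u J)) (card_pos.1 (by omega))
  have havg : degSum H J ≤ (j + 1) * #(nbrsIn H v J) := hj ▸ sum_le_card_nsmul _ _ _ hmax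
  refine ⟨v, hv, ?_⟩
  have herase := degSum_erase_add (H := H) hv
  nlinarith

theorem exists_subset_card_eq_degSum_mul_sq_le {j : ℕ} (hj : j ≤ #P) :
    ∃ J ⊆ P, #J = j ∧ degSum H J * #P ^ 2 ≤ degSum H P * j ^ 2 := by
  induction hj using Nat.decreasingInduction with
  | self => exact ⟨P, subset_rfl, rfl, le_rfl⟩
  | of_succ j _ ih =>
    obtain ⟨J, hJP, hJ, hle⟩ := ih
    obtain ⟨v, hv, hv_le⟩ := exists_degSum_erase_mul_sq_le (H := H) hJ
    refine ⟨J.erase v, (erase_subset _ _).trans hJP, by rw [card_erase_of_mem hv]; omega, ?_⟩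
    refine Nat.le_of_mul_le_mul_right (c := (j + 1) ^ 2) ?_ (by positivity)
    calc degSum H (J.erase v) * #P ^ 2 * (j + 1) ^ 2
        = degSum H (J.erase v) * (j + 1) ^ 2 * #P ^ 2 := by ring
      _ ≤ degSum H J * j ^ 2 * #P ^ 2 := Nat.mul_le_mul_right _ hv_le
      _ = degSum H J * #P ^ 2 * j ^ 2 := by ring
      _ ≤ degSum H P * (j + 1) ^ 2 * j ^ 2 := Nat.mul_le_mul_right _ hle
      _ = degSum H P * j ^ 2 * (j + 1) ^ 2 := by ring

end DegreeSums

section SparseColourings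

/-- `A` is an independent subset of `M ⊆ S`, and `M` contains all neighbours of `A` in `S`. Hence
`A` stays independent when vertices of `S \ M` that are independent of each other are added. -/
structure IsIndepCore {α : Type*} (G : SimpleGraph α) (S M A : Finset α) : Prop where
  subset : A ⊆ M
  subset_ambient : M ⊆ S
  isIndepSet : G.IsIndepSet (A : Set α)
  nbrsIn_subset : ∀ a ∈ A, nbrsIn G a S ⊆ M

variable {V α : Type*} {G : SimpleGraph α} {k c D : ℕ} {S M A I : Finset α} {v : α}

theorem IsIndepCore.union (hA : IsIndepCore G S M A) {M' : Finset α} (hI : IsIndepCore G S M' I)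
    (hIM : Disjoint I M) : IsIndepCore G S (M ∪ M') (A ∪ I) where
  subset := union_subset_union hA.subset hI.subset
  subset_ambient := union_subset hA.subset_ambient hI.subset_ambient
  isIndepSet := by
    have not_adj : ∀ a ∈ A, ∀ x ∈ I, ¬ G.Adj a x := fun a ha x hx hax =>
      disjoint_left.1 hIM hx (hA.nbrsIn_subset a ha
        (mem_nbrsIn.2 ⟨hI.subset_ambient (hI.subset hx), hax⟩))
    rw [coe_union, IsIndepSet, Set.pairwise_union]
    exact ⟨hA.isIndepSet, hI.isIndepSet, fun a ha x hx _ =>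
      ⟨not_adj a ha x hx, fun h => not_adj a ha x hx h.symm⟩⟩
  nbrsIn_subset x hx := (mem_union.1 hx).elim
    (fun hx => (hA.nbrsIn_subset x hx).trans subset_union_left)
    fun hx => (hI.nbrsIn_subset x hx).trans subset_union_right

-- The core is a large independent set of neighbours of `v`; the second neighbours of `v` reached
-- through it contain a large independent set as well, so there are few of them.
theorem exists_isIndepCore_of_mem (hk : 6 ≤ k) (hodd : Odd k) (hG : (cycleGraph k).Free G)
    (hS : ∀ x ∈ S, #(nbrsIn G x S) ≤ D)
    (hindep : ∀ I ⊆ S, G.IsIndepSet (I : Set α) → #I < 4 * D) (hv : v ∈ S) {T : Finset α}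
    (hT : T ⊆ S) :
    ∃ I ⊆ T, ∃ M, IsIndepCore G S M I ∧ #(nbrsIn G v T) ≤ k * #I ∧ #M ≤ D * (4 * k + 2) := by
  obtain ⟨I, hIv, hI, hIcard⟩ := exists_isIndepSet_of_forall_adj (by omega) hG (v := v)
    (Q := nbrsIn G v T) fun x hx => (mem_nbrsIn.1 hx).2
  have hIT : I ⊆ T := hIv.trans nbrsIn_subset
  have hvI : ∀ x ∈ I, G.Adj v x := fun x hx => (mem_nbrsIn.1 (hIv hx)).2
  set Q : Finset α := {z ∈ S | z ≠ v ∧ ¬ G.Adj v z ∧ ∃ y ∈ I, G.Adj y z} with hQ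
  have hQS : Q ⊆ S := filter_subset _ _
  obtain ⟨I', hI'Q, hI', hQcard⟩ := exists_isIndepSet_of_forall_common_neighbor hk hodd hG
    (v := v) (Q := Q) (by simp [hQ]) (fun x hx => (mem_filter.1 hx).2.2.1) fun x hx => by
      obtain ⟨y, hy, hyx⟩ := (mem_filter.1 hx).2.2.2
      exact ⟨y, hvI y hy, hyx⟩
  have hQle : #Q ≤ k * (4 * D) :=
    hQcard.trans (Nat.mul_le_mul_left _ (hindep I' (hI'Q.trans hQS) hI').le)
  refine ⟨I, hIT, insert v (nbrsIn G v S) ∪ Q, ⟨?_, ?_, hI, ?_⟩, hIcard, ?_⟩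
  · exact fun x hx => by simp [mem_nbrsIn, hT (hIT hx), hvI x hx]
  · exact union_subset (insert_subset hv nbrsIn_subset) hQS
  · intro y hy z hz
    simp only [hQ, mem_nbrsIn, mem_union, mem_insert, mem_filter] at hz ⊢
    grind
  · have := card_union_le (insert v (nbrsIn G v S)) Q
    have := card_insert_le v (nbrsIn G v S)
    have := hS v hv
    have hD := hindep ∅ (by simp) (by simp)
    nlinarith

theorem exists_isIndepSet_four_mul_le (hk : 6 ≤ k) (hodd : Odd k) (hG : (cycleGraph k).Free G)
    (hS : ∀ x ∈ S, #(nbrsIn G x S) ≤ D)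
    (hdense : ∀ M, #M ≤ 8 * k * (D * (4 * k + 2)) →
      ∃ v ∈ S \ M, D ≤ 2 * #(nbrsIn G v (S \ M))) :
    ∃ I ⊆ S, G.IsIndepSet (I : Set α) ∧ 4 * D ≤ #I := by
  by_contra! hno
  have exists_core : ∀ i ≤ 8 * k, ∃ A M, IsIndepCore G S M A ∧
      #M ≤ i * (D * (4 * k + 2)) ∧ i * D ≤ 2 * k * #A := by
    intro i
    induction i with
    | zero => exact fun _ => ⟨∅, ∅, ⟨by simp, by simp, by simp, by simp⟩, by simp, by simp⟩
    | succ i ih =>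
      intro hi
      obtain ⟨A, M, hA, hM, hAcard⟩ := ih (by omega)
      obtain ⟨v, hv, hdeg⟩ := hdense M
        (hM.trans (Nat.mul_le_mul_right _ (by omega)))
      obtain ⟨I, hIT, M', hI, hIcard, hM'⟩ := exists_isIndepCore_of_mem hk hodd hG hS hno
        (mem_sdiff.1 hv).1 (sdiff_subset : S \ M ⊆ S)
      have hIM : Disjoint I M := disjoint_of_subset_left hIT sdiff_disjoint
      refine ⟨A ∪ I, M ∪ M', hA.union hI hIM, ?_, ?_⟩
      · exact (card_union_le _ _).trans ((add_le_add hM hM').trans_eq (by ring))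
      · rw [card_union_of_disjoint (disjoint_of_subset_left hA.subset hIM.symm)]
        nlinarith
  obtain ⟨A, M, hA, -, hAcard⟩ := exists_core (8 * k) le_rfl
  have := hno A (hA.subset.trans hA.subset_ambient) hA.isIndepSet
  have : 2 * k * #A < 2 * k * (4 * D) := Nat.mul_lt_mul_of_pos_left this (by omega)
  nlinarith

theorem card_filter_lt_mul_le_degSum [Fintype α] (b : ℕ) :
    #{v | Fintype.card α < b * #(nbrsIn G v univ)} * Fintype.card α ≤ b * degSum G univ := by
  rw [degSum, mul_sum]
  exact (card_nsmul_le_sum _ _ _ fun v hv => (mem_filter.1 hv).2.le).trans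
    (sum_le_sum_of_subset (subset_univ _))

theorem exists_card_compl_add_mul_le [Fintype α] (hc : 0 < c)
    (hG : 256 * c * degSum G univ ≤ Fintype.card α ^ 2) : ∃ S : Finset α, ∃ D : ℕ,
      (∀ x ∈ S, #(nbrsIn G x S) ≤ D) ∧ 8 * (#Sᶜ + c * D) ≤ Fintype.card α := by
  set N := Fintype.card α
  refine ⟨({v | 16 * c * #(nbrsIn G v univ) ≤ N} : Finset α), N / (16 * c), fun x hx => ?_, ?_⟩
  · rw [Nat.le_div_iff_mul_le (by omega), mul_comm]
    exact (Nat.mul_le_mul_left _ (card_le_card (nbrsIn_mono (subset_univ _)))).trans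
      (mem_filter.1 hx).2
  · have hD : 16 * (c * (N / (16 * c))) ≤ N := by
      simpa [mul_assoc] using Nat.mul_div_le N (16 * c)
    have hhigh := card_filter_lt_mul_le_degSum (G := G) (16 * c)
    simp only [compl_filter, not_le]
    set T : Finset α := {v | N < 16 * c * #(nbrsIn G v univ)}
    have hT : 16 * #T ≤ N := by
      rcases Nat.eq_zero_or_pos N with hN | hN
      · have : #T ≤ N := card_le_univ T
        omega
      · exact Nat.le_of_mul_le_mul_right (c := N) (by nlinarith) hN
    omega

-- The pair `(S, D)` minimizes `#Sᶜ + c * D`.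
theorem exists_forall_exists_le_two_mul_card_nbrsIn [Fintype α] (hc : 0 < c)
    (hG : 256 * c * degSum G univ ≤ Fintype.card α ^ 2) : ∃ S : Finset α, ∃ D : ℕ,
      (∀ x ∈ S, #(nbrsIn G x S) ≤ D) ∧ 8 * #Sᶜ ≤ Fintype.card α ∧
      ∀ M, 2 * #M < c * D → ∃ v ∈ S \ M, D ≤ 2 * #(nbrsIn G v (S \ M)) := by
  obtain ⟨S₀, D₀, hS₀, hcost₀⟩ := exists_card_compl_add_mul_le hc hG
  obtain ⟨⟨S, D⟩, hS, hmin⟩ := exists_minimalFor_of_wellFoundedLT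
    (fun p : Finset α × ℕ => ∀ x ∈ p.1, #(nbrsIn G x p.1) ≤ p.2) (fun p => #p.1ᶜ + c * p.2)
    ⟨(S₀, D₀), hS₀⟩
  replace hmin : ∀ S' D', (∀ x ∈ S', #(nbrsIn G x S') ≤ D') → #Sᶜ + c * D ≤ #S'ᶜ + c * D' :=
    fun S' D' h => not_lt.1 fun hlt => hlt.not_ge (hmin (j := (S', D')) h hlt.le)
  refine ⟨S, D, hS, by have := hmin S₀ D₀ hS₀; omega, fun M hcard => ?_⟩
  by_contra! hlow
  have hle := hmin (S \ M) (D / 2) fun x hx => by have := hlow x hx; omega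
  have hcompl : #(S \ M)ᶜ ≤ #Sᶜ + #M := by
    rw [sdiff_eq, compl_inf, compl_compl]
    exact card_union_le _ _
  have : 2 * (c * (D / 2)) ≤ c * D := by
    rw [mul_left_comm]
    exact Nat.mul_le_mul_left _ (Nat.mul_div_le D 2)
  omega

theorem exists_sparse_subset_with_isIndepSet [Fintype α] (hk : 6 ≤ k) (hodd : Odd k)
    (hG : (cycleGraph k).Free G)
    (hsparse : 256 * (16 * k * (4 * k + 2) + 1) * degSum G univ ≤ Fintype.card α ^ 2) :
    ∃ (S I : Finset α) (D : ℕ), 8 * #Sᶜ ≤ Fintype.card α ∧ I ⊆ S ∧ G.IsIndepSet (I : Set α) ∧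
      4 * D ≤ #I ∧ ∀ x ∈ S, #(nbrsIn G x S) ≤ D := by
  obtain ⟨S, D, hS, hcompl, hdense⟩ :=
    exists_forall_exists_le_two_mul_card_nbrsIn (by omega) hsparse
  rcases Nat.eq_zero_or_pos D with rfl | hD
  · exact ⟨S, ∅, 0, hcompl, by simp, by simp, by simp, hS⟩
  obtain ⟨I, hIS, hI, hcard⟩ := exists_isIndepSet_four_mul_le hk hodd hG hS
    fun M hle => hdense M (by nlinarith)
  exact ⟨S, I, D, hcompl, hIS, hI, hcard, hS⟩

theorem card_mul_le_degSum {H : SimpleGraph V} {J S : Finset V} (hS : S ⊆ J) {d : ℕ}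
    (hd : ∀ s ∈ S, d ≤ #(nbrsIn H s J)) : #S * d ≤ degSum H J :=
  (card_nsmul_le_sum S _ d hd).trans (sum_le_sum_of_subset hS)

-- The vertices of highest degree are placed on `I`; every later vertex `u` satisfies
-- `deg u * #I ≤ 2 * m`, so its embedded neighbours forbid at most `m / 2` vertices of `S`.
theorem blueEmbeds_univ_of_sparse_subset [Fintype V] [Fintype α] {H : SimpleGraph V} {m l : ℕ}
    (hl : 3 ≤ l) (hm : degSum H univ = 2 * m) (hV : Fintype.card V ≤ m + 1)
    (hN : Fintype.card α = 2 * m + l) (hS : 8 * #Sᶜ ≤ Fintype.card α) (hIS : I ⊆ S)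
    (hI : G.IsIndepSet (I : Set α)) (hD : 4 * D ≤ #I) (hdeg : ∀ x ∈ S, #(nbrsIn G x S) ≤ D) :
    BlueEmbeds H G univ univ := by
  have : Nonempty α := Fintype.card_pos_iff.1 (by omega)
  by_cases hVI : Fintype.card V ≤ #I
  · exact (blueEmbeds_of_isIndepSet hI (by simpa)).mono (subset_univ _)
  obtain ⟨T, hTV, hTI, htop⟩ := exists_subset_card_eq_forall_le (J := univ)
    (fun u => #(nbrsIn H u univ)) (s := #I) (by rw [card_univ]; omega)
  obtain ⟨f, hf⟩ := blueEmbeds_of_isIndepSet (H := H) hI hTI.le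
  obtain ⟨g, hg⟩ := (hf.mono hIS).exists_greedy hdeg hTV htop fun A hTA hA u hu hmax => by
    have hdegSum := card_mul_le_degSum hA hmax
    have hTA := card_le_card hTA
    have hAV : #A < Fintype.card V := card_lt_univ_of_notMem (mem_sdiff.1 hu).2
    have hu4 : 4 * (#(nbrsIn H u univ) * D) ≤ 2 * m := by
      rw [← hm]
      calc 4 * (#(nbrsIn H u univ) * D) = 4 * D * #(nbrsIn H u univ) := by ring
        _ ≤ #A * #(nbrsIn H u univ) := Nat.mul_le_mul_right _ (by omega)
        _ ≤ degSum H univ := hdegSum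
    have := card_compl_add_card S
    rw [card_empty]
    omega
  exact (hg.mono (subset_univ S)).blueEmbeds

end SparseColourings

section StrongEdges

variable {α : Type*} {G : SimpleGraph α} {k t : ℕ} {A B : Finset α}

/-- The graph of the edges of `G` that lie in some copy of `K_{t,t}` in `G`, called strong edges. -/
def strongGraph (G : SimpleGraph α) (t : ℕ) : SimpleGraph α where
  Adj u v := ∃ A B : Finset α, #A = t ∧ #B = t ∧ u ∈ A ∧ v ∈ B ∧ G.IsCompleteBetween A B
  symm := ⟨fun _ _ ⟨A, B, hA, hB, hu, hv, hAB⟩ => ⟨B, A, hB, hA, hv, hu, hAB.symm⟩⟩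
  loopless := ⟨fun _ ⟨_, _, _, _, huA, huB, hAB⟩ => (hAB huA huB).ne rfl⟩

theorem strongGraph_le : strongGraph G t ≤ G :=
  fun _ _ ⟨_, _, _, _, hu, hv, hAB⟩ => hAB hu hv

theorem not_isCompleteBetween_sdiff_strongGraph (ht : 0 < t) (hA : #A = t) (hB : #B = t) :
    ¬ (G \ strongGraph G t).IsCompleteBetween A B := fun h => by
  obtain ⟨a, ha⟩ := card_pos.1 (hA ▸ ht)
  obtain ⟨b, hb⟩ := card_pos.1 (hB ▸ ht)
  exact (h ha hb).2 ⟨A, B, hA, hB, ha, hb, fun _ hx _ hy => (h hx hy).1⟩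

theorem exists_isPath_of_isCompleteBetween (hAB : G.IsCompleteBetween A B) {a b : α} {j : ℕ}
    (ha : a ∈ A) (hb : b ∈ B) (hA : j + 1 ≤ #A) (hB : j + 1 ≤ #B) :
    ∃ p : G.Walk a b, p.IsPath ∧ p.length = 2 * j + 1 ∧ ∀ x ∈ p.support, x ∈ A ∪ B := by
  induction j generalizing a A B with
  | zero =>
    exact ⟨(hAB ha hb).toWalk, Walk.IsPath.of_adj _, rfl, by simp [ha, hb]⟩
  | succ j ih =>
    obtain ⟨a', ha'⟩ : (A.erase a).Nonempty := card_pos.1 (by rw [card_erase_of_mem ha]; omega)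
    obtain ⟨b', hb'⟩ : (B.erase b).Nonempty := card_pos.1 (by rw [card_erase_of_mem hb]; omega)
    obtain ⟨hbb', hb'⟩ := mem_erase.1 hb'
    have haB : a ∉ B := fun h => (hAB ha h).ne rfl
    have hb'A : b' ∉ A := fun h => (hAB h hb').ne rfl
    obtain ⟨p, hp, hlen, hpAB⟩ := ih (A := A.erase a) (B := B.erase b')
      (fun x hx y hy => hAB (erase_subset _ _ hx) (erase_subset _ _ hy)) ha'
      (mem_erase.2 ⟨hbb'.symm, hb⟩) (by rw [card_erase_of_mem ha]; omega)
      (by rw [card_erase_of_mem hb']; omega)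
    simp only [mem_union, mem_erase] at hpAB
    have hb'p : b' ∉ p.support := fun h => by simpa [hb'A] using hpAB b' h
    have hap : a ∉ p.support := fun h => by simpa [haB] using hpAB a h
    refine ⟨(p.cons (hAB (mem_of_mem_erase ha') hb').symm).cons (hAB ha hb'),
      (hp.cons hb'p).cons (by simp [hap, (hAB ha hb').ne]), by simp [hlen]; ring, ?_⟩
    simp only [Walk.support_cons, List.mem_cons, mem_union]
    rintro x (rfl | rfl | hx)
    · exact .inl ha
    · exact .inr hb'
    · exact (hpAB x hx).imp And.right And.right

theorem strongGraph.exists_isPath {u v : α} (huv : (strongGraph G t).Adj u v) {F : Finset α}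
    (hu : u ∉ F) (hv : v ∉ F) {j : ℕ} (hj : #F + j + 1 ≤ t) :
    ∃ p : G.Walk u v, p.IsPath ∧ p.length = 2 * j + 1 ∧ ∀ x ∈ p.support, x ∉ F := by
  obtain ⟨A, B, hA, hB, huA, hvB, hAB⟩ := huv
  have := le_card_sdiff F A
  have := le_card_sdiff F B
  obtain ⟨p, hp, hlen, hpF⟩ := exists_isPath_of_isCompleteBetween (j := j) (A := A \ F) (B := B \ F)
    (fun x hx y hy => hAB (sdiff_subset hx) (sdiff_subset hy))
    (mem_sdiff.2 ⟨huA, hu⟩) (mem_sdiff.2 ⟨hvB, hv⟩) (by omega) (by omega)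
  refine ⟨p, hp, hlen, fun x hx => ?_⟩
  rw [← union_sdiff_distrib] at hpF
  exact (mem_sdiff.1 (hpF x hx)).2

theorem strongGraph.not_triangle (hk : 3 ≤ k) (hodd : Odd k) (hG : (cycleGraph k).Free G)
    {u v w : α} (huv : (strongGraph G k).Adj u v) (hvw : G.Adj v w) : ¬ G.Adj w u := by
  intro hwu
  obtain ⟨j, rfl⟩ := hodd
  obtain ⟨p, hp, hlen, hpw⟩ := strongGraph.exists_isPath huv (F := {w}) (j := j - 1)
    (by simp [hwu.ne']) (by simp [hvw.ne]) (by rw [card_singleton]; omega)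
  simp only [mem_singleton] at hpw
  exact not_adj_of_isPath_of_cycleGraph_free hk hG (hp.concat (fun h => hpw w h rfl) hvw)
    (by simp only [Walk.length_concat]; omega) hwu

theorem strongGraph.not_pentagon (hk : 5 ≤ k) (hodd : Odd k) (hG : (cycleGraph k).Free G)
    {u v x w y : α} (huv : (strongGraph G k).Adj u v) (hvx : (strongGraph G k).Adj v x)
    (hxw : G.Adj x w) (hwy : G.Adj w y) : ¬ (strongGraph G k).Adj y u := by
  intro hyu
  have hvx' := strongGraph_le hvx
  have hyu' := strongGraph_le hyu
  have not_triangle {a b c : α} (hab : (strongGraph G k).Adj a b) :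
      G.Adj b c → ¬ G.Adj c a := not_triangle (by omega) hodd hG hab
  have hxu : x ≠ u := by rintro rfl; exact not_triangle hyu hxw hwy
  have hyv : y ≠ v := by rintro rfl; exact not_triangle hvx hxw hwy
  have hxy : x ≠ y := by rintro rfl; exact not_triangle huv hvx' hyu'
  have hwu : w ≠ u := by rintro rfl; exact not_triangle huv hvx' hxw
  have hwv : w ≠ v := by rintro rfl; exact not_triangle huv hwy hyu'
  obtain ⟨j, rfl⟩ := hodd
  have hthree := card_le_three (a := x) (b := w) (c := y)
  obtain ⟨p, hp, hlen, hpF⟩ := strongGraph.exists_isPath huv (F := {x, w, y}) (j := j - 2)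
    (by simp [hxu.symm, hwu.symm, hyu'.ne']) (by simp [hvx'.ne, hwv.symm, hyv.symm]) (by omega)
  have hpx : x ∉ p.support := fun h => hpF x h (by simp)
  have hpw : w ∉ p.support := fun h => hpF w h (by simp)
  have hpy : y ∉ p.support := fun h => hpF y h (by simp)
  have hpath : (((p.concat hvx').concat hxw).concat hwy).IsPath :=
    ((hp.concat hpx hvx').concat (by simp [Walk.support_concat, hpw, hxw.ne']) hxw).concat
      (by simp [Walk.support_concat, hpy, hxy.symm, hwy.ne']) hwy
  exact not_adj_of_isPath_of_cycleGraph_free (by omega) hG hpath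
    (by simp only [Walk.length_concat]; omega) hyu'

theorem strongGraph.isIndepSet_nbrsIn (hk : 3 ≤ k) (hodd : Odd k) (hG : (cycleGraph k).Free G)
    (v : α) (W : Finset α) : G.IsIndepSet (nbrsIn (strongGraph G k) v W : Set α) :=
  fun _ hx _ hy _ hxy => not_triangle hk hodd hG (mem_nbrsIn.1 hx).2 hxy
    (strongGraph_le (mem_nbrsIn.1 hy).2).symm

theorem strongGraph.isIndepSet_second_nbrsIn (hk : 5 ≤ k) (hodd : Odd k)
    (hG : (cycleGraph k).Free G) (v : α) (W : Finset α) :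
    G.IsIndepSet (({b ∈ W | ∃ x ∈ nbrsIn (strongGraph G k) v W, (strongGraph G k).Adj x b} :
      Finset α) : Set α) := fun b hb b' hb' _ hbb' => by
  obtain ⟨-, x, hx, hxb⟩ := mem_filter.1 hb
  obtain ⟨-, x', hx', hxb'⟩ := mem_filter.1 hb'
  exact not_pentagon hk hodd hG (mem_nbrsIn.1 hx).2 hxb hbb' (strongGraph_le hxb').symm
    (mem_nbrsIn.1 hx').2.symm

end StrongEdges

section KovariSosTuran

variable {α : Type*} [Fintype α] {G : SimpleGraph α} {t w : ℕ}

theorem card_le_mul_card_filter_le_mul_card_nbrsIn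
    (hG : Fintype.card α ^ 2 < w * degSum G univ) :
    Fintype.card α ≤ 2 * w * #{v | Fintype.card α ≤ 2 * w * #(nbrsIn G v univ)} := by
  set N := Fintype.card α with hN
  set P : Finset α := {v | N ≤ 2 * w * #(nbrsIn G v univ)} with hP
  have hdeg : ∀ v ∈ (univ : Finset α), 2 * w * #(nbrsIn G v univ) ≤
      N + if v ∈ P then 2 * w * N else 0 := by
    intro v _
    split_ifs with hv
    · have : #(nbrsIn G v univ) ≤ N := card_le_univ _
      have := Nat.mul_le_mul_left (2 * w) this
      omega
    · simp only [hP, mem_filter_univ, not_le] at hv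
      omega
  have hsum : 2 * w * degSum G univ ≤ N * N + 2 * w * N * #P := by
    rw [degSum, mul_sum]
    refine (sum_le_sum hdeg).trans_eq ?_
    rw [sum_add_distrib, ← sum_filter]
    simp [← hN, mul_comm]
  by_contra! hlt
  nlinarith

theorem pow_le_mul_choose {N d : ℕ} (hN : 8 * w * t ≤ N) (hd : N ≤ 2 * w * d) (hpos : 0 < N) :
    N ^ t ≤ (8 * w) ^ t * t.factorial * d.choose t := by
  have hw : 0 < w := Nat.pos_of_ne_zero fun h => by simp [h] at hd; omega
  have htd : t ≤ d + 1 := by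
    by_contra! h
    have : 8 * w * (d + 1) < 8 * w * t := Nat.mul_lt_mul_of_pos_left h (by omega)
    nlinarith
  obtain ⟨e, he⟩ := Nat.exists_eq_add_of_le htd
  have hNe : N ≤ 8 * w * e := by
    have : 2 * w * (d + 1) = 2 * w * (t + e) := by rw [he]
    nlinarith
  calc N ^ t ≤ (8 * w * e) ^ t := Nat.pow_le_pow_left hNe t
    _ = (8 * w) ^ t * (d + 1 - t) ^ t := by rw [he, Nat.add_sub_cancel_left, mul_pow]
    _ ≤ (8 * w) ^ t * (t.factorial * d.choose t) := by
      rw [← Nat.descFactorial_eq_factorial_mul_choose]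
      exact Nat.mul_le_mul_left _ (Nat.pow_sub_le_descFactorial d t)
    _ = (8 * w) ^ t * t.factorial * d.choose t := by ring

theorem sum_choose_card_nbrsIn_le
    (hfree : ∀ A B : Finset α, #A = t → #B = t → ¬ G.IsCompleteBetween A B) (P : Finset α) :
    ∑ v ∈ P, (#(nbrsIn G v univ)).choose t ≤ (Fintype.card α).choose t * t := by
  let r : α → Finset α → Prop := fun v T => T ⊆ nbrsIn G v univ
  have habove : ∀ v ∈ P, (#(nbrsIn G v univ)).choose t =
      #((powersetCard t (univ : Finset α)).bipartiteAbove r v) := fun v _ => by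
    rw [← card_powersetCard]
    congr 1
    ext T
    simp [r, mem_powersetCard, bipartiteAbove, and_comm]
  have hbelow : ∀ T ∈ powersetCard t (univ : Finset α), #(P.bipartiteBelow r T) ≤ t := by
    intro T hT
    by_contra! hlt
    obtain ⟨A, hA, hAcard⟩ := exists_subset_card_eq hlt.le
    exact hfree A T hAcard (mem_powersetCard.1 hT).2 fun a ha b hb =>
      (mem_nbrsIn.1 ((mem_filter.1 (hA ha)).2 hb)).2
  rw [sum_congr rfl habove, sum_card_bipartiteAbove_eq_sum_card_bipartiteBelow]
  refine (sum_le_card_nsmul _ _ _ hbelow).trans_eq ?_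
  rw [card_powersetCard, smul_eq_mul, card_univ]

theorem mul_degSum_le_card_sq
    (hN : 8 * w * t + 2 * w * ((8 * w) ^ t * t.factorial * t) < Fintype.card α)
    (hfree : ∀ A B : Finset α, #A = t → #B = t → ¬ G.IsCompleteBetween A B) :
    w * degSum G univ ≤ Fintype.card α ^ 2 := by
  by_contra! hdense
  have hcard := card_le_mul_card_filter_le_mul_card_nbrsIn hdense
  set N := Fintype.card α
  set P : Finset α := {v | N ≤ 2 * w * #(nbrsIn G v univ)}
  have hP : #P * N ^ t ≤ (8 * w) ^ t * t.factorial * t * N ^ t := calc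
    #P * N ^ t ≤ ∑ v ∈ P, (8 * w) ^ t * t.factorial * (#(nbrsIn G v univ)).choose t :=
      card_nsmul_le_sum _ _ _ fun v hv =>
        pow_le_mul_choose (by omega) (mem_filter.1 hv).2 (by omega)
    _ ≤ (8 * w) ^ t * t.factorial * (N.choose t * t) := by
      rw [← mul_sum]
      exact Nat.mul_le_mul_left _ (sum_choose_card_nbrsIn_le hfree P)
    _ ≤ (8 * w) ^ t * t.factorial * (N ^ t * t) :=
      Nat.mul_le_mul_left _ (Nat.mul_le_mul_right _ (Nat.choose_le_pow _ _))
    _ = (8 * w) ^ t * t.factorial * t * N ^ t := by ring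
  have hPle := Nat.le_of_mul_le_mul_right hP (pow_pos (by omega) t)
  have := Nat.mul_le_mul_left (2 * w) hPle
  omega

end KovariSosTuran

section Separators

open Relation

/-- `S` is a separator of the relation `E` on `Q`: the labelling of `Q \ S` by vertices of `Q` is
constant on components, and no label is used more than `r` times. -/
structure IsSeparator {V : Type*} (E : V → V → Prop) (r : ℕ) (Q S : Finset V) (label : V → V) :
    Prop where
  label_mem : ∀ u ∈ Q \ S, label u ∈ Q
  label_eq : ∀ u ∈ Q \ S, ∀ w ∈ Q \ S, E u w → label u = label w
  card_le : ∀ c, #{u ∈ Q \ S | label u = c} ≤ r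

section ParentRelation

variable {V : Type*} {E : V → V → Prop} {rank : V → ℕ} {Q S : Finset V} {label : V → V}
  {u v w c c' ρ : V} {r : ℕ}

theorem rank_le_of_reflTransGen (hrank : ∀ u w, E u w → rank w < rank u)
    (h : ReflTransGen E u v) : rank v ≤ rank u := by
  induction h with
  | refl => rfl
  | tail _ hE ih => exact (hrank _ _ hE).le.trans ih

theorem eq_of_reflTransGen_of_parent (hrank : ∀ u w, E u w → rank w < rank u)
    (hE : Relator.RightUnique E) (huc : ReflTransGen E u c) (hc : E c v)
    (huc' : ReflTransGen E u c') (hc' : E c' v) : c = c' := by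
  have key {a b : V} (h : ReflTransGen E a b) (ha : E a v) (hb : E b v) : a = b := by
    obtain rfl | ⟨d, had, hdb⟩ := h.cases_head
    · rfl
    · obtain rfl := hE had ha
      exact absurd (hrank _ _ hb) (rank_le_of_reflTransGen hrank hdb).not_gt
  rcases ReflTransGen.total_of_right_unique hE huc huc' with h | h
  exacts [key h hc hc', (key h hc' hc).symm]

/-- The label is the child of `v` on the way from `u` up to `v`. -/
theorem exists_label_of_descendants (hrank : ∀ u w, E u w → rank w < rank u)
    (hE : Relator.RightUnique E) (v : V) : ∃ top : V → V,
      (∀ u, ReflTransGen E u v → u ≠ v → ReflTransGen E u (top u) ∧ E (top u) v) ∧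
      ∀ u w, E u w → ReflTransGen E w v → w ≠ v → top u = top w := by
  have hchild (u : V) : ∃ c, ReflTransGen E u v → u ≠ v → ReflTransGen E u c ∧ E c v := by
    by_cases hu : ReflTransGen E u v ∧ u ≠ v
    · obtain h | ⟨c, huc, hc⟩ := hu.1.cases_tail
      · exact absurd h.symm hu.2
      · exact ⟨c, fun _ _ => ⟨huc, hc⟩⟩
    · exact ⟨u, fun h hne => absurd ⟨h, hne⟩ hu⟩
  choose top htop using hchild
  refine ⟨top, htop, fun u w huw hwv hne => ?_⟩
  have huv : u ≠ v := by
    rintro rfl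
    exact (hrank _ _ huw).not_ge (rank_le_of_reflTransGen hrank hwv)
  obtain ⟨hw, hw'⟩ := htop w hwv hne
  obtain ⟨hu, hu'⟩ := htop u (.head huw hwv) huv
  exact eq_of_reflTransGen_of_parent hrank hE hu hu' (.head huw hw) hw'

theorem mem_of_reflTransGen (hclosed : ∀ u ∈ Q, ∀ w, E u w → w ∈ Q) (hu : u ∈ Q)
    (h : ReflTransGen E u w) : w ∈ Q := by
  induction h with
  | refl => exact hu
  | tail _ hE ih => exact hclosed _ ih _ hE

theorem IsSeparator.exists_insert (hrank : ∀ u w, E u w → rank w < rank u)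
    (hE : Relator.RightUnique E) (hclosed : ∀ u ∈ Q, ∀ w, E u w → w ∈ Q)
    (hsmall : ∀ c ∈ Q, rank v < rank c → #{u ∈ Q | ReflTransGen E u c} ≤ r)
    (hS : IsSeparator E r {u ∈ Q | ¬ ReflTransGen E u v} S label) :
    ∃ label', IsSeparator E r Q (insert v S) label' := by
  obtain ⟨top, htop, htop_eq⟩ := exists_label_of_descendants hrank hE v
  have htopE {u : V} (hu : u ∈ Q \ insert v S) (huv : ReflTransGen E u v) :
      ReflTransGen E u (top u) ∧ E (top u) v :=
    htop u huv (by rintro rfl; simp at hu)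
  have htopQ {u : V} (hu : u ∈ Q \ insert v S) (huv : ReflTransGen E u v) : top u ∈ Q :=
    mem_of_reflTransGen hclosed (mem_sdiff.1 hu).1 (htopE hu huv).1
  have hmem {u : V} (hu : u ∈ Q \ insert v S) (huv : ¬ ReflTransGen E u v) :
      u ∈ ({u ∈ Q | ¬ ReflTransGen E u v} : Finset V) \ S := by
    simp_all
  refine ⟨fun u => if ReflTransGen E u v then top u else label u, fun u hu => ?_,
    fun u hu w hw huw => ?_, fun c => ?_⟩
  · split_ifs with huv
    · exact htopQ hu huv
    · exact (mem_filter.1 (hS.label_mem u (hmem hu huv))).1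
  · by_cases hwv : ReflTransGen E w v
    · rw [if_pos hwv, if_pos (.head huw hwv)]
      exact htop_eq u w huw hwv (by simp_all)
    · have huv : ¬ ReflTransGen E u v := fun huv => by
        obtain rfl | ⟨x, hux, hxv⟩ := huv.cases_head
        · simp at hu
        · exact hwv (hE hux huw ▸ hxv)
      rw [if_neg hwv, if_neg huv]
      exact hS.label_eq u (hmem hu huv) w (hmem hw hwv) huw
  · by_cases hc : ∃ u ∈ Q \ insert v S, ReflTransGen E u v ∧ top u = c
    · obtain ⟨u, hu, huv, rfl⟩ := hc
      refine (card_le_card fun w hw => ?_).trans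
        (hsmall _ (htopQ hu huv) (hrank _ _ (htopE hu huv).2))
      obtain ⟨hwQ, hw⟩ := mem_filter.1 hw
      refine mem_filter.2 ⟨(mem_sdiff.1 hwQ).1, ?_⟩
      split_ifs at hw with hwv
      · exact hw ▸ (htopE hwQ hwv).1
      · have hlabel := hS.label_mem w (hmem hwQ hwv)
        rw [hw, mem_filter] at hlabel
        exact absurd (ReflTransGen.single (htopE hu huv).2) hlabel.2
    · refine (card_le_card fun w hw => ?_).trans (hS.card_le c)
      obtain ⟨hwQ, hw⟩ := mem_filter.1 hw
      split_ifs at hw with hwv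
      · exact absurd ⟨w, hwQ, hwv, hw⟩ hc
      · exact mem_filter.2 ⟨hmem hwQ hwv, hw⟩

/-- Cutting repeatedly at a vertex of largest rank among those with more than `r` remaining
descendants removes more than `r` vertices at each step. -/
theorem exists_separator_of_parent (hrank : ∀ u w, E u w → rank w < rank u)
    (hE : Relator.RightUnique E) (hclosed : ∀ u ∈ Q, ∀ w, E u w → w ∈ Q)
    (hroot : ∀ u ∈ Q, ReflTransGen E u ρ) :
    ∃ S ⊆ Q, ∃ label, r * #S ≤ #Q ∧ IsSeparator E r Q S label := by
  induction Q using Finset.strongInduction with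
  | H Q ih =>
    by_cases hbig : ∃ v ∈ Q, r < #{u ∈ Q | ReflTransGen E u v}
    · obtain ⟨v, hv, hmax⟩ := exists_max_image {v ∈ Q | r < #{u ∈ Q | ReflTransGen E u v}} rank
        (hbig.imp fun v hv => mem_filter.2 hv)
      rw [mem_filter] at hv
      let Q' : Finset V := {u ∈ Q | ¬ ReflTransGen E u v}
      have hQ' : Q' ⊆ Q := filter_subset _ _
      obtain ⟨S, hSQ', label, hcard, hS⟩ := ih Q'
        (filter_ssubset.2 ⟨v, hv.1, not_not.2 .refl⟩)
        (fun u hu w huw => mem_filter.2 ⟨hclosed u (hQ' hu) w huw, fun hwv =>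
          (mem_filter.1 hu).2 (.head huw hwv)⟩)
        (fun u hu => hroot u (hQ' hu))
      obtain ⟨label', hlabel'⟩ := hS.exists_insert hrank hE hclosed fun c hc hvc => by
        by_contra! hlt
        exact (hmax c (mem_filter.2 ⟨hc, hlt⟩)).not_gt hvc
      refine ⟨insert v S, insert_subset hv.1 (hSQ'.trans hQ'), label', ?_, hlabel'⟩
      have hsplit : #{u ∈ Q | ReflTransGen E u v} + #Q' = #Q := card_filter_add_card_filter_not _
      have := Nat.mul_le_mul_left r (card_insert_le v S)
      lia
    · push Not at hbig
      have hρ : ∀ u ∈ Q, ρ ∈ Q := fun u hu => mem_of_reflTransGen hclosed hu (hroot u hu)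
      refine ⟨∅, empty_subset _, fun _ => ρ, by simp, by simpa using hρ, by simp, fun c => ?_⟩
      rw [sdiff_empty]
      obtain rfl | ⟨u, hu⟩ := Q.eq_empty_or_nonempty
      · simp
      refine (card_le_card fun w hw => ?_).trans (hbig ρ (hρ u hu))
      exact mem_filter.2 ⟨(mem_filter.1 hw).1, hroot w (mem_filter.1 hw).1⟩

end ParentRelation

section Connected

variable {V : Type*} {T H : SimpleGraph V} {m : ℕ}

/-- `w` is the parent of `u` in the tree `T` rooted at `ρ`. -/
def IsParent (T : SimpleGraph V) (ρ u w : V) : Prop :=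
  T.Adj u w ∧ T.dist w ρ < T.dist u ρ

theorem IsParent.rightUnique (hT : T.IsTree) (ρ : V) : Relator.RightUnique (IsParent T ρ) := by
  have hpath (u w : V) (h : IsParent T ρ u w) : ∃ p : T.Walk w ρ, (p.cons h.1).IsPath := by
    obtain ⟨p, hp⟩ := hT.connected.exists_walk_length_eq_dist w ρ
    refine ⟨p, (p.cons h.1).isPath_of_length_eq_dist (le_antisymm ?_ (dist_le _))⟩
    rw [Walk.length_cons, hp]
    exact h.2
  intro u w w' h h'
  obtain ⟨p, hp⟩ := hpath u w h
  obtain ⟨q, hq⟩ := hpath u w' h'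
  have hpq := (hT.isAcyclic.subsingleton_path u ρ).elim ⟨_, hp⟩ ⟨_, hq⟩
  simp only [Subtype.mk.injEq, Walk.cons.injEq] at hpq
  exact hpq.1

theorem reflTransGen_isParent (hT : T.Connected) (ρ u : V) :
    ReflTransGen (IsParent T ρ) u ρ := by
  obtain ⟨p, hp⟩ := hT.exists_walk_length_eq_dist u ρ
  induction p with
  | nil => rfl
  | @cons u w ρ h p ih =>
    rw [Walk.length_cons] at hp
    have hle := dist_le p
    have htriangle := hT.dist_triangle (u := u) (v := w) (w := ρ)
    rw [dist_eq_one_iff_adj.2 h] at htriangle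
    exact .head ⟨h, by lia⟩ (ih (by lia))

variable [Fintype V]

theorem exists_separator_of_isTree (hT : T.IsTree) (r : ℕ) :
    ∃ S label, r * #S ≤ Fintype.card V ∧ IsSeparator T.Adj r univ S label := by
  obtain ⟨ρ⟩ := hT.connected.nonempty
  obtain ⟨S, -, label, hcard, hS⟩ :=
    exists_separator_of_parent (E := IsParent T ρ) (rank := (T.dist · ρ)) (Q := univ) (r := r)
      (fun _ _ h => h.2) (IsParent.rightUnique hT ρ) (by simp)
      (fun u _ => reflTransGen_isParent hT.connected ρ u)
  refine ⟨S, label, hcard, hS.label_mem, fun u hu v hv huv => ?_, hS.card_le⟩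
  have hdist := hT.dist_eq_dist_add_one_of_adj ρ huv
  rw [dist_comm (v := u), dist_comm (v := v)] at hdist
  rcases hdist with h | h
  · exact hS.label_eq u hu v hv ⟨huv, by lia⟩
  · exact (hS.label_eq v hv u hu ⟨huv.symm, by lia⟩).symm

theorem degSum_univ (H : SimpleGraph V) : degSum H univ = 2 * #H.edgeFinset := by
  rw [← H.sum_degrees_eq_twice_card_edges]
  refine sum_congr rfl fun v _ => ?_
  rw [← card_neighborFinset_eq_degree]
  congr 1
  ext x
  simp [mem_nbrsIn]

theorem card_le_of_connected (hH : H.Connected)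
    (hm : degSum H univ = 2 * m) : Fintype.card V ≤ m + 1 := by
  have h := hH.card_vert_le_card_edgeSet_add_one
  have hdeg := degSum_univ H
  rw [edgeFinset_card, ← Nat.card_eq_fintype_card] at hdeg
  rw [Nat.card_eq_fintype_card] at h
  lia

theorem exists_separator_of_connected (hH : H.Connected) (hm : degSum H univ = 2 * m) (r : ℕ) :
    ∃ S label, IsSeparator H.Adj r univ S label ∧
      r * #S + r * Fintype.card V ≤ r * (m + 1) + Fintype.card V := by
  obtain ⟨T, hTH, hT⟩ := hH.exists_isTree_le
  obtain ⟨S, label, hcard, hS⟩ := exists_separator_of_isTree hT r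
  let S' : Finset V := (H.edgeFinset \ T.edgeFinset).image fun e => e.out.1
  have hS' : #S' + Fintype.card V ≤ m + 1 := by
    have himage : #S' ≤ #(H.edgeFinset \ T.edgeFinset) := card_image_le
    have hsdiff := card_sdiff_add_card_eq_card (edgeFinset_mono hTH)
    have := degSum_univ H
    have := hT.card_edgeFinset
    lia
  have hsub : univ \ (S ∪ S') ⊆ univ \ S := sdiff_subset_sdiff subset_rfl subset_union_left
  refine ⟨S ∪ S', label, ⟨fun u hu => hS.label_mem u (hsub hu), fun u hu v hv huv =>
    hS.label_eq u (hsub hu) v (hsub hv) ?_, fun c =>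
    (card_le_card (filter_subset_filter _ hsub)).trans (hS.card_le c)⟩, ?_⟩
  · by_contra hT
    have hmem : (Quot.out s(u, v)).1 ∈ S' := mem_image_of_mem _ (by simpa using ⟨huv, hT⟩)
    simp only [mem_sdiff, mem_union, not_or] at hu hv
    rcases Sym2.mem_iff.1 (Sym2.out_fst_mem s(u, v)) with h | h
    exacts [hu.2.2 (h ▸ hmem), hv.2.2 (h ▸ hmem)]
  · have := Nat.mul_le_mul_left r (card_union_le S S')
    have := Nat.mul_le_mul_left r hS'
    lia

end Connected

end Separators

section DenseStrongGraph

variable {V α : Type*} [Fintype V] {H : SimpleGraph V} {G : SimpleGraph α} {k m c d r R : ℕ}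
  {S T J : Finset V} {label : V → V} {X U W : Finset α} {L : V → Finset α} {f : V → α}

theorem exists_isIndepSet_forall_card_nbrsIn_le_four
    (hdeg : 2 * degSum H univ ≤ 5 * Fintype.card V) (hR : 10 * R ≤ Fintype.card V) :
    ∃ J : Finset V, H.IsIndepSet (J : Set V) ∧ #J = R ∧ ∀ v ∈ J, #(nbrsIn H v univ) ≤ 4 := by
  let P : Finset V := {v | #(nbrsIn H v univ) ≤ 4}
  have hP : #Pᶜ * 5 ≤ degSum H univ :=
    card_mul_le_degSum (subset_univ _) fun s hs => by
      simpa [P, Nat.lt_iff_add_one_le] using hs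
  have := card_add_card_compl P
  obtain ⟨J, hJP, hJ, hcard⟩ := exists_isIndepSet_of_degenerate (G := H) (Q := P) (d := 5)
    fun Q hQ ⟨v, hv⟩ => ⟨v, hv, Nat.lt_succ_of_le
      ((card_le_card (nbrsIn_mono (subset_univ Q))).trans (mem_filter.1 (hQ hv)).2)⟩
  obtain ⟨J', hJ', hR'⟩ := exists_subset_card_eq (show R ≤ #J by lia)
  exact ⟨J', hJ.mono (coe_subset.2 hJ'), hR', fun v hv => (mem_filter.1 (hJP (hJ' hv))).2⟩

theorem IsBlueEmbedding.blueEmbeds_univ_of_isIndepSet [Nonempty α]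
    (hf : IsBlueEmbedding H G U (fun _ => ∅) Jᶜ f) (hJ : H.IsIndepSet (J : Set V))
    (hadj : ∀ u ∉ J, ∀ v ∈ J, H.Adj u v → ∀ w ∈ U, ¬ G.Adj (f u) w)
    (hcard : Fintype.card V ≤ #U) : BlueEmbeds H G univ U := by
  have hroom : #J ≤ #(U \ Jᶜ.image f) := by
    have := le_card_sdiff (Jᶜ.image f) U
    have := card_image_le (s := Jᶜ) (f := f)
    have := card_add_card_compl J
    lia
  obtain ⟨g, hg⟩ := blueEmbeds_of_isIndepSet (G := (⊥ : SimpleGraph α)) (H := H)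
    (by simp [Set.Pairwise]) hroom
  have hgJ : IsBlueEmbedding H G U (fun _ => ∅) J g :=
    { hg with
      mem := fun u hu => (mem_sdiff.1 (hg.mem u hu)).1
      not_adj := fun u hu v hv huv => absurd huv (hJ hu hv huv.ne) }
  have hfg := hf.piecewise hgJ disjoint_compl_left
    (fun u hu v hv h => (mem_sdiff.1 (hg.mem v hv)).2 (mem_image.2 ⟨u, hu, h⟩))
    (fun u hu v hv huv => hadj u (Finset.mem_compl.1 hu) v hv huv _ (hgJ.mem v hv))
  rw [union_comm, union_compl] at hfg
  exact hfg.blueEmbeds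

theorem IsSeparator.blueListEmbeds [Nonempty α] (hS : IsSeparator H.Adj r univ S label)
    (hSJ : Disjoint S J) (hk : 3 ≤ k) (hG : (cycleGraph k).Free G)
    (hcard : #J + r * d + k * r ^ 2 ≤ #W) : BlueListEmbeds H G J W d := fun _ hL =>
  have hJS : J ⊆ univ \ S := subset_sdiff.2 ⟨subset_univ J, hSJ.symm⟩
  exists_isBlueEmbedding_of_label_classes hk hG
    (fun u hu v hv huv => hS.label_eq u (hJS hu) v (hJS hv) huv)
    (fun _ _ => (card_le_card (filter_subset_filter _ hJS)).trans (hS.card_le _)) hL hcard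

/-- The vertices of `T` are placed on `X`, whose vertices have no red neighbours in `U`; what
remains outside `J` splits into small components, and `J` fills the vertices left over. -/
theorem blueEmbeds_univ_of_isSeparator [Nonempty α] (hk : 3 ≤ k) (hG : (cycleGraph k).Free G)
    (hX : G.IsIndepSet (X : Set α)) (hXU : X ⊆ U) (hU : ∀ w ∈ U, ∀ x ∈ X, ¬ G.Adj w x)
    (hS : IsSeparator H.Adj r univ S label) (hJ : H.IsIndepSet (J : Set V))
    (hJr : k * r ^ 2 ≤ #J) (hST : S ⊆ T ∪ J) (hTJ : Disjoint T J)
    (hN : ∀ u ∉ J, ∀ v ∈ J, H.Adj u v → u ∈ T) (hTX : #T = #X) (hcard : Fintype.card V ≤ #U) :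
    BlueEmbeds H G univ U := by
  obtain ⟨f, hf⟩ := blueEmbeds_of_isIndepSet (H := H) hX hTX.le
  let K := (T ∪ J)ᶜ
  have hK : #K + #T + #J = Fintype.card V := by
    rw [add_assoc, ← card_union_of_disjoint hTJ, add_comm, card_add_card_compl]
  obtain ⟨g, hg⟩ : BlueEmbeds H G K (U \ X) :=
    (hS.blueListEmbeds (d := 0) (disjoint_compl_right.mono_left hST) hk hG
      (by have := card_sdiff_add_card_eq_card hXU; lia)).blueEmbeds
  have hTK : Disjoint T K := disjoint_compl_right.mono_left subset_union_left
  have hfg : IsBlueEmbedding H G U (fun _ => ∅) (T ∪ K) (T.piecewise f g) :=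
    (hf.mono hXU).piecewise (hg.mono sdiff_subset) hTK
      (fun u hu v hv h => (mem_sdiff.1 (hg.mem v hv)).2 (h ▸ hf.mem u hu))
      (fun u hu v hv _ h => hU _ (mem_sdiff.1 (hg.mem v hv)).1 _ (hf.mem u hu) h.symm)
  have hTKJ : T ∪ K = Jᶜ := by
    ext u
    have hu : u ∈ T → u ∉ J := fun h => Finset.disjoint_left.1 hTJ h
    simp only [K, mem_union, Finset.mem_compl]
    tauto
  rw [hTKJ] at hfg
  refine hfg.blueEmbeds_univ_of_isIndepSet hJ (fun u hu v hv huv w hw h => ?_) hcard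
  have huT := hN u hu v hv huv
  rw [piecewise_eq_of_mem _ _ _ huT] at h
  exact hU w hw _ (hf.mem u huT) h.symm

theorem blueEmbeds_univ_of_anticomplete [Nonempty α] (hk : 3 ≤ k) (hG : (cycleGraph k).Free G)
    (hH : H.Connected) (hm : degSum H univ = 2 * m) (hc : 8 ≤ c)
    (hmV : 100 * c * m ≤ 100 * c * Fintype.card V + Fintype.card V)
    (hlarge : 1000 * (k * (100 * c) ^ 2 + 1) * (100 * c) ≤ Fintype.card V)
    (hX : G.IsIndepSet (X : Set α)) (hXcard : 2 * m ≤ c * #X) (hXU : X ⊆ U)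
    (hU : ∀ w ∈ U, ∀ x ∈ X, ¬ G.Adj w x) (hUcard : Fintype.card V ≤ #U) :
    BlueEmbeds H G univ U := by
  have hVm := card_le_of_connected hH hm
  obtain ⟨S, label, hS, hScard⟩ := exists_separator_of_connected hH hm (100 * c)
  have hmV' : 4 * m ≤ 5 * Fintype.card V := by nlinarith
  set n := Fintype.card V
  set R := k * (100 * c) ^ 2
  have : 1000 * (100 * c * R) + 1000 * (100 * c) ≤ n := by
    rw [← mul_add, ← Nat.mul_add_one, mul_comm (100 * c), ← mul_assoc]
    exact hlarge
  have hRn : 800 * R ≤ 100 * c * R := Nat.mul_le_mul_right R (by lia)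
  obtain ⟨J, hJ, hJR, hJdeg⟩ := exists_isIndepSet_forall_card_nbrsIn_le_four (H := H) (R := R)
    (by lia) (by lia)
  have hJc : #Jᶜ = n - R := by rw [card_compl, hJR]
  let T₀ := (S ∪ J.biUnion fun v => nbrsIn H v univ) \ J
  have hT₀J : T₀ ⊆ Jᶜ := fun u hu => Finset.mem_compl.2 (mem_sdiff.1 hu).2
  have hT₀card : #T₀ ≤ #S + R * 4 := calc
    #T₀ ≤ #(S ∪ J.biUnion fun v => nbrsIn H v univ) := card_le_card sdiff_subset
    _ ≤ #S + #(J.biUnion fun v => nbrsIn H v univ) := card_union_le _ _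
    _ ≤ #S + R * 4 := by grw [card_biUnion_le_card_mul _ _ 4 hJdeg, hJR]
  have hT₀X : #T₀ ≤ #X := by
    refine Nat.le_of_mul_le_mul_left (c := 100 * c) ?_ (by lia)
    have := Nat.mul_le_mul_left (100 * c) hT₀card
    lia
  obtain ⟨X', hX'X, hX'⟩ := exists_subset_card_eq (min_le_left #X (n - R))
  obtain ⟨T, hT₀T, hTJ, hT⟩ := exists_subsuperset_card_eq hT₀J
    (le_min hT₀X (hJc ▸ card_le_card hT₀J)) ((min_le_right _ _).trans hJc.ge)
  refine blueEmbeds_univ_of_isSeparator hk hG (hX.mono (coe_subset.2 hX'X)) (hX'X.trans hXU)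
    (fun w hw x hx => hU w hw x (hX'X hx)) hS hJ hJR.ge (fun u hu => ?_)
    (Finset.disjoint_left.2 fun u hu => Finset.mem_compl.1 (hTJ hu)) (fun u hu v hv huv => ?_)
    (hT.trans hX'.symm) hUcard
  · by_cases huJ : u ∈ J
    · exact mem_union_right _ huJ
    · exact mem_union_left _ (hT₀T (mem_sdiff.2 ⟨mem_union_left _ hu, huJ⟩))
  · refine hT₀T (mem_sdiff.2 ⟨mem_union_right _ (mem_biUnion.2 ⟨v, hv, ?_⟩), hu⟩)
    exact mem_nbrsIn.2 ⟨mem_univ u, huv.symm⟩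

variable [Fintype α]

theorem degSum_univ_le_degSum_add (G : SimpleGraph α) (W : Finset α) :
    degSum G univ ≤ degSum G W + 2 * ∑ v ∈ Wᶜ, #(nbrsIn G v univ) := by
  have hcross : ∑ u ∈ W, #(nbrsIn G u Wᶜ) = ∑ v ∈ Wᶜ, #(nbrsIn G v W) := by
    simpa only [bipartiteAbove, bipartiteBelow, nbrsIn, G.adj_comm] using
      sum_card_bipartiteAbove_eq_sum_card_bipartiteBelow (s := W) (t := Wᶜ) G.Adj
  have hsplit (u : α) : #(nbrsIn G u univ) = #(nbrsIn G u W) + #(nbrsIn G u Wᶜ) := by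
    rw [nbrsIn, ← union_compl W, filter_union, card_union_of_disjoint
      (disjoint_filter_filter disjoint_compl_right)]
    rfl
  calc degSum G univ
      = ∑ u ∈ W, #(nbrsIn G u univ) + ∑ v ∈ Wᶜ, #(nbrsIn G v univ) := (sum_add_sum_compl W _).symm
    _ = degSum G W + ∑ v ∈ Wᶜ, #(nbrsIn G v W) + ∑ v ∈ Wᶜ, #(nbrsIn G v univ) := by
      rw [sum_congr rfl fun u _ => hsplit u, sum_add_distrib, hcross, degSum]
    _ ≤ degSum G W + ∑ v ∈ Wᶜ, #(nbrsIn G v univ) + ∑ v ∈ Wᶜ, #(nbrsIn G v univ) := by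
      gcongr
      exact nbrsIn_mono (subset_univ W)
    _ = degSum G W + 2 * ∑ v ∈ Wᶜ, #(nbrsIn G v univ) := by ring

theorem exists_adj_of_card_sq_lt_mul_degSum
    (h : 2 * Fintype.card α ^ 2 < c * degSum G univ) : ∃ u v, G.Adj u v ∧
      Fintype.card α ≤ c * #(nbrsIn G u univ) ∧ Fintype.card α ≤ c * #(nbrsIn G v univ) := by
  let W : Finset α := {v | Fintype.card α ≤ c * #(nbrsIn G v univ)}
  have hlow : c * ∑ v ∈ Wᶜ, #(nbrsIn G v univ) ≤ Fintype.card α * Fintype.card α := by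
    rw [mul_sum]
    exact (sum_le_card_nsmul _ _ (Fintype.card α) fun v hv =>
      le_of_lt (by simpa [W] using hv)).trans
      (Nat.mul_le_mul_right _ (card_le_univ _))
  have hW : degSum G W ≠ 0 := fun h0 => by
    have := Nat.mul_le_mul_left c (degSum_univ_le_degSum_add G W)
    rw [h0] at this
    nlinarith
  obtain ⟨u, hu, hne⟩ := exists_ne_zero_of_sum_ne_zero hW
  obtain ⟨v, hv⟩ := card_ne_zero.1 hne
  obtain ⟨hvW, huv⟩ := mem_nbrsIn.1 hv
  exact ⟨u, v, huv, (mem_filter.1 hu).2, (mem_filter.1 hvW).2⟩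

/-- A vertex with red neighbours in the strong neighbourhoods of both ends of a strong edge would
lie on a forbidden pentagon, so one of the two sets without such neighbours covers half of `G`. -/
theorem exists_isIndepSet_anticomplete (hk : 5 ≤ k) (hodd : Odd k) (hG : (cycleGraph k).Free G)
    (hdense : 2 * Fintype.card α ^ 2 < c * degSum (strongGraph G k) univ) :
    ∃ X U : Finset α, G.IsIndepSet (X : Set α) ∧ Fintype.card α ≤ c * #X ∧ X ⊆ U ∧
      (∀ w ∈ U, ∀ x ∈ X, ¬ G.Adj w x) ∧ Fintype.card α ≤ 2 * #U := by
  obtain ⟨u, v, huv, hu, hv⟩ := exists_adj_of_card_sq_lt_mul_degSum hdense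
  let U (v : α) : Finset α := {w | ∀ x ∈ nbrsIn (strongGraph G k) v univ, ¬ G.Adj w x}
  have hcover : univ ⊆ U u ∪ U v := fun w _ => by
    by_contra hw
    simp only [U, mem_union, mem_filter, mem_univ, true_and, not_or, not_forall, not_not] at hw
    obtain ⟨⟨y, hy, hwy⟩, ⟨x, hx, hwx⟩⟩ := hw
    exact strongGraph.not_pentagon hk hodd hG huv (mem_nbrsIn.1 hx).2 hwx.symm hwy
      (mem_nbrsIn.1 hy).2.symm
  have key (v : α) (hv : Fintype.card α ≤ c * #(nbrsIn (strongGraph G k) v univ))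
      (hU : Fintype.card α ≤ 2 * #(U v)) : ∃ X U : Finset α, G.IsIndepSet (X : Set α) ∧
        Fintype.card α ≤ c * #X ∧ X ⊆ U ∧ (∀ w ∈ U, ∀ x ∈ X, ¬ G.Adj w x) ∧
        Fintype.card α ≤ 2 * #U := by
    have hX := strongGraph.isIndepSet_nbrsIn (by lia) hodd hG v univ
    exact ⟨_, U v, hX, hv, fun x hx => mem_filter.2 ⟨mem_univ _, fun y hy h => hX hx hy h.ne h⟩,
      fun w hw => (mem_filter.1 hw).2, hU⟩
  have hcard := (card_le_card hcover).trans (card_union_le _ _)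
  rw [card_univ] at hcard
  rcases le_total #(U u) #(U v) with hle | hle
  · exact key v hv (by lia)
  · exact key u hu (by lia)

theorem blueEmbeds_univ_of_dense_strongGraph (hk : 5 ≤ k) (hodd : Odd k)
    (hG : (cycleGraph k).Free G) (hH : H.Connected) (hm : degSum H univ = 2 * m)
    (hN : 2 * m + 1 < Fintype.card α) (hc : 8 ≤ c)
    (hmV : 100 * c * m ≤ 100 * c * Fintype.card V + Fintype.card V)
    (hlarge : 1000 * (k * (100 * c) ^ 2 + 1) * (100 * c) ≤ Fintype.card V)
    (hdense : 2 * Fintype.card α ^ 2 < c * degSum (strongGraph G k) univ) :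
    BlueEmbeds H G univ univ := by
  have : Nonempty α := Fintype.card_pos_iff.1 (by lia)
  obtain ⟨X, U, hX, hXcard, hXU, hU, hUcard⟩ := exists_isIndepSet_anticomplete hk hodd hG hdense
  have hVm := card_le_of_connected hH hm
  exact (blueEmbeds_univ_of_anticomplete (by lia) hG hH hm hc hmV hlarge hX (by lia) hXU hU
    (by lia)).mono (subset_univ _)

end DenseStrongGraph

section SparseWeakEdges

variable {V α : Type*} {H : SimpleGraph V} {G : SimpleGraph α} {k m c q d e r D : ℕ}
  {S J : Finset V} {label : V → V} {I U W : Finset α} {v₀ : α}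

theorem card_nbrsIn_le_add_sdiff (G G' : SimpleGraph α) (v : α) (W : Finset α) :
    #(nbrsIn G v W) ≤ #(nbrsIn G' v W) + #(nbrsIn (G \ G') v W) := by
  refine (card_le_card fun x hx => ?_).trans (card_union_le _ _)
  rw [mem_nbrsIn] at hx
  simp only [mem_union, mem_nbrsIn, SimpleGraph.sdiff_adj]
  tauto

theorem blueListEmbeds_of_degSum_add_le [Nonempty α] (hk : 3 ≤ k) (hodd : Odd k)
    (hG : (cycleGraph k).Free G) (hweak : ∀ v ∈ U, #(nbrsIn (G \ strongGraph G k) v U) ≤ e)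
    (hdeg : ∀ u ∈ J, #(nbrsIn H u J) ≤ q)
    (hcard : degSum H J + q * (q * e) + 2 * (q * e) + #J ≤ #U) :
    BlueListEmbeds H G J U (q * e) := by
  intro L hL
  rcases U.eq_empty_or_nonempty with rfl | hUne
  · obtain rfl : J = ∅ := card_eq_zero.1 (by rw [card_empty] at hcard; lia)
    exact ⟨fun _ => Classical.arbitrary α, .empty⟩
  obtain ⟨v, -, hmax⟩ := exists_max_image U (fun v => #(nbrsIn (strongGraph G k) v U)) hUne
  set D := #(nbrsIn (strongGraph G k) v U)
  obtain ⟨S₀, hS₀J, hS₀, htop⟩ := exists_subset_card_eq_forall_le (fun u => #(nbrsIn H u J))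
    (min_le_left #J (D - q * e))
  obtain ⟨f₀, hf₀⟩ : ∃ f, IsBlueEmbedding H G (nbrsIn (strongGraph G k) v U) L S₀ f := by
    rcases S₀.eq_empty_or_nonempty with rfl | hne
    · exact ⟨fun _ => Classical.arbitrary α, .empty⟩
    · have := card_pos.2 hne
      exact exists_isBlueEmbedding_of_isIndepSet (strongGraph.isIndepSet_nbrsIn hk hodd hG v U)
        (fun u hu => hL u (hS₀J hu)) (by lia)
  refine (hf₀.mono nbrsIn_subset).exists_greedy (Δ := D + e)
    (fun x hx => (card_nbrsIn_le_add_sdiff G (strongGraph G k) x U).trans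
      (Nat.add_le_add (hmax x hx) (hweak x hx))) hS₀J htop fun T hT hTJ u hu huT => ?_
  obtain ⟨huJ, hu⟩ := mem_sdiff.1 hu
  have hTcard : #T < #J := card_lt_card ⟨hTJ, fun h => hu (h huJ)⟩
  have hS₀T := card_le_card hT
  have hLu := hL u huJ
  have hdegS₀ := card_mul_le_degSum hS₀J fun s hs => huT s (hT hs)
  have hq := hdeg u huJ
  generalize #(nbrsIn H u J) = p at *
  have hpD := Nat.mul_le_mul_left p (show D ≤ #S₀ + q * e by lia)
  have hpe := Nat.mul_le_mul_right e hq
  have hpqe := Nat.mul_le_mul_right (q * e) hq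
  lia

theorem exists_subset_card_eq_sq_mul_degSum_le {P : Finset V} {a b j n : ℕ} (hj : j ≤ #P)
    (hP : a * n ≤ b * #P) (hjn : b * j ≤ d * n) (hn : 0 < n) :
    ∃ J ⊆ P, #J = j ∧ a ^ 2 * degSum H J ≤ d ^ 2 * degSum H P := by
  obtain ⟨J, hJP, hJ, hle⟩ := exists_subset_card_eq_degSum_mul_sq_le (H := H) hj
  refine ⟨J, hJP, hJ, Nat.le_of_mul_le_mul_left (c := n ^ 2) ?_ (by positivity)⟩
  calc n ^ 2 * (a ^ 2 * degSum H J) = degSum H J * (a * n) ^ 2 := by ring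
    _ ≤ degSum H J * (b * #P) ^ 2 := by gcongr
    _ = b ^ 2 * (degSum H J * #P ^ 2) := by ring
    _ ≤ b ^ 2 * (degSum H P * j ^ 2) := by gcongr
    _ = degSum H P * (b * j) ^ 2 := by ring
    _ ≤ degSum H P * (d * n) ^ 2 := by gcongr
    _ = n ^ 2 * (d ^ 2 * degSum H P) := by ring

variable [Fintype V]

theorem mul_card_add_card_compl_le_degSum (hdeg : ∀ v, 0 < #(nbrsIn H v univ))
    (hS : ∀ s ∈ S, q ≤ #(nbrsIn H s univ)) : q * #S + #Sᶜ ≤ degSum H univ := by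
  rw [degSum, ← sum_add_sum_compl S]
  have hlow := card_nsmul_le_sum S _ q hS
  have hrest := card_nsmul_le_sum Sᶜ (fun v => #(nbrsIn H v univ)) 1 fun v _ => hdeg v
  rw [smul_eq_mul] at hlow hrest
  lia

theorem blueEmbeds_univ_of_card_nbrsIn_strongGraph_le [Fintype α] (hk : 3 ≤ k) (hodd : Odd k)
    (hG : (cycleGraph k).Free G) (hdeg : ∀ v, 0 < #(nbrsIn H v univ))
    (hm : degSum H univ = 2 * m) (hV : 0 < Fintype.card V) (hVm : Fintype.card V ≤ m)
    (hN : 2 * m ≤ Fintype.card α) (he : 100 * (c * e) ≤ Fintype.card V)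
    (hW : 100 * #Wᶜ ≤ Fintype.card V)
    (hweak : ∀ v ∈ W, #(nbrsIn (G \ strongGraph G k) v W) ≤ e)
    (hmax : ∀ v ∈ W, #(nbrsIn (strongGraph G k) v W) ≤ D)
    (hv₀ : #(nbrsIn (strongGraph G k) v₀ W) = D) (hD : Fintype.card α ≤ c * D)
    (hD' : 100 * D ≤ 48 * Fintype.card V) : BlueEmbeds H G univ univ := by
  have : Nonempty α := ⟨v₀⟩
  have hDpos : 0 < D := Nat.pos_of_ne_zero fun h => by rw [h] at hD; lia
  have hWcard := card_add_card_compl W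
  obtain ⟨S₀, -, hS₀, htop⟩ := exists_subset_card_eq_forall_le (J := univ) (s := D)
    (fun v => #(nbrsIn H v univ)) (by rw [card_univ]; lia)
  obtain ⟨f₀, hf₀⟩ := blueEmbeds_of_isIndepSet (H := H)
    (strongGraph.isIndepSet_nbrsIn hk hodd hG v₀ W) (hS₀.trans hv₀.symm).le
  refine BlueEmbeds.mono ((hf₀.mono nbrsIn_subset).exists_greedy (J := univ) (Δ := D + e)
    (fun x hx => (card_nbrsIn_le_add_sdiff G (strongGraph G k) x W).trans
      (Nat.add_le_add (hmax x hx) (hweak x hx))) (subset_univ _) htop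
    fun T hT _ u hu huT => ?_) (subset_univ W)
  have hTV : #T < Fintype.card V := card_lt_univ_of_notMem (mem_sdiff.1 hu).2
  have hTcompl := card_add_card_compl T
  have hDT : D ≤ #T := hS₀ ▸ card_le_card hT
  have hdegT := mul_card_add_card_compl_le_degSum hdeg huT
  generalize #(nbrsIn H u univ) = q at *
  have hqD := Nat.mul_le_mul_left q hDT
  have hqc : q ≤ c := Nat.le_of_mul_le_mul_right (c := D) (by lia) hDpos
  have hqe : q * e ≤ c * e := Nat.mul_le_mul_right _ hqc
  rw [card_empty, Nat.mul_add]
  rcases Nat.lt_or_ge q 2 with hq | hq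
  · have : q * D ≤ 1 * D := Nat.mul_le_mul_right _ (by lia)
    lia
  · obtain ⟨p, rfl⟩ := Nat.exists_eq_add_of_le hq
    have := Nat.mul_le_mul_left p hDT
    rw [Nat.add_mul] at hdegT ⊢
    lia

theorem BlueListEmbeds.blueEmbeds_univ [Nonempty α] (hJ : BlueListEmbeds H G J U (q * e))
    (hdeg : ∀ u ∈ J, #(nbrsIn H u univ) ≤ q) (hI : G.IsIndepSet (I : Set α))
    (hIU : Disjoint I U) (he : ∀ x ∈ I, #(nbrsIn G x U) ≤ e) (hcard : #Jᶜ ≤ #I) :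
    BlueEmbeds H G univ (I ∪ U) := by
  obtain ⟨f, hf⟩ := blueEmbeds_of_isIndepSet (H := H) hI hcard
  obtain ⟨g, hg⟩ := hJ (fun u => (nbrsIn H u Jᶜ).biUnion fun s => nbrsIn G (f s) U) fun u hu =>
    (card_biUnion_le_card_mul _ _ e fun s hs => he _ (hf.mem s (nbrsIn_subset hs))).trans
      (Nat.mul_le_mul_right _ ((card_le_card (nbrsIn_mono (subset_univ _))).trans (hdeg u hu)))
  have hg₀ : IsBlueEmbedding H G U (fun _ => ∅) J g := { hg with notMem := by simp }
  have hfg := (hf.mono subset_union_left).piecewise (hg₀.mono subset_union_right)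
    disjoint_compl_left
    (fun u hu v hv h => Finset.disjoint_left.1 hIU (hf.mem u hu) (h ▸ hg.mem v hv))
    (fun u hu v hv huv h => hg.notMem v hv (mem_biUnion.2
      ⟨u, mem_nbrsIn.2 ⟨hu, huv.symm⟩, mem_nbrsIn.2 ⟨hg.mem v hv, h⟩⟩))
  rw [union_comm Jᶜ, union_compl] at hfg
  exact hfg.blueEmbeds

theorem exists_blueListEmbeds_of_le [Nonempty α] (hk : 3 ≤ k) (hG : (cycleGraph k).Free G)
    (hH : H.Connected) (hm : degSum H univ = 2 * m) (hq : 800 ≤ q)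
    (hmV : q * Fintype.card V + Fintype.card V < q * m)
    (hma : 100 * m ≤ 145 * Fintype.card V)
    (he : 100 * (q * (q * (q * e))) ≤ Fintype.card V) (hr : 100 * (q * r) ≤ Fintype.card V)
    (hlarge : 10 * (k * q ^ 2 * q) ≤ Fintype.card V) (hV : 10000 ≤ Fintype.card V)
    (hD : 48 * Fintype.card V < 100 * D) (hDV : D < Fintype.card V)
    (hU : 2 * m ≤ #U + D + Fintype.card V + r) :
    ∃ J : Finset V, #Jᶜ ≤ D ∧ (∀ u ∈ J, #(nbrsIn H u univ) ≤ q) ∧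
      BlueListEmbeds H G J U (q * e) := by
  obtain ⟨S, label, hS, hScard⟩ := exists_separator_of_connected hH hm q
  let T : Finset V := {v | q ≤ #(nbrsIn H v univ)}
  have hT : #T * q ≤ 2 * m :=
    hm ▸ card_mul_le_degSum (subset_univ _) fun s hs => (mem_filter.1 hs).2
  have hT' := Nat.mul_le_mul_left #T hq
  have hS' : 800 * #S ≤ 361 * Fintype.card V + 800 := by
    refine Nat.le_of_mul_le_mul_left (c := q) ?_ (by lia)
    have := Nat.mul_le_mul_left q hma
    have := Nat.mul_le_mul_right (Fintype.card V) hq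
    lia
  have hST := card_union_le S T
  obtain ⟨K, hSTK, -, hK⟩ := exists_subsuperset_card_eq (n := D) (subset_univ (S ∪ T)) (by lia)
    (by rw [card_univ]; lia)
  refine ⟨Kᶜ, by rw [compl_compl, hK], fun u hu => ?_, hS.blueListEmbeds
    (disjoint_compl_right.mono_left (subset_union_left.trans hSTK)) hk hG ?_⟩
  · by_contra! h
    exact Finset.mem_compl.1 hu (hSTK (mem_union_right _ (mem_filter.2 ⟨mem_univ u, h.le⟩)))
  · have : 2 * Fintype.card V + q * (q * e) + k * q ^ 2 + r ≤ 2 * m :=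
      Nat.le_of_mul_le_mul_left (c := q) (by lia) (by lia)
    rw [card_compl, hK]
    lia

theorem exists_blueListEmbeds_of_lt [Nonempty α] (hk : 3 ≤ k) (hodd : Odd k)
    (hG : (cycleGraph k).Free G) (hm : degSum H univ = 2 * m) (hc : 8 ≤ c)
    (hmV : 2 * m ≤ c * Fintype.card V) (hma : 145 * Fintype.card V < 100 * m)
    (he : 100 * (100 * c * (100 * c * e)) ≤ Fintype.card V) (hr : 100 * r ≤ Fintype.card V)
    (hV : 10000 ≤ Fintype.card V) (hD : 48 * Fintype.card V < 100 * D)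
    (hDV : D < Fintype.card V) (hU : 2 * m ≤ #U + D + Fintype.card V + r)
    (hweak : ∀ v ∈ U, #(nbrsIn (G \ strongGraph G k) v U) ≤ e) :
    ∃ J : Finset V, #Jᶜ ≤ D ∧ (∀ u ∈ J, #(nbrsIn H u univ) ≤ 100 * c) ∧
      BlueListEmbeds H G J U (100 * c * e) := by
  let T : Finset V := {v | 100 * c ≤ #(nbrsIn H v univ)}
  have hTdeg : #T * (100 * c) ≤ 2 * m :=
    hm ▸ card_mul_le_degSum (subset_univ _) fun s hs => (mem_filter.1 hs).2
  have hT : 100 * #T ≤ Fintype.card V := Nat.le_of_mul_le_mul_left (c := c) (by lia) (by lia)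
  have hTcompl := card_add_card_compl T
  obtain ⟨J, hJT, hJ, hJdeg⟩ := exists_subset_card_eq_sq_mul_degSum_le (H := H) (P := Tᶜ)
    (j := Fintype.card V - D) (n := Fintype.card V) (a := 99) (b := 100) (d := 52) (by lia)
    (by lia) (by lia) (by lia)
  have := degSum_mono (H := H) (subset_univ Tᶜ)
  have hdeg (u) (hu : u ∈ J) : #(nbrsIn H u univ) ≤ 100 * c :=
    le_of_lt (by simpa [T] using hJT hu)
  refine ⟨J, by rw [card_compl]; lia, hdeg, blueListEmbeds_of_degSum_add_le hk hodd hG hweak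
    (fun u hu => (card_le_card (nbrsIn_mono (subset_univ J))).trans (hdeg u hu)) ?_⟩
  have : 100 * c * e ≤ 100 * c * (100 * c * e) := Nat.le_mul_of_pos_left _ (by lia)
  lia

theorem exists_blueListEmbeds [Nonempty α] (hk : 3 ≤ k) (hodd : Odd k)
    (hG : (cycleGraph k).Free G) (hH : H.Connected) (hm : degSum H univ = 2 * m) (hc : 8 ≤ c)
    (hmc : 2 * m ≤ c * Fintype.card V)
    (hmV : 100 * c * Fintype.card V + Fintype.card V < 100 * c * m)
    (he : 100 * (100 * c * (100 * c * (100 * c * e))) ≤ Fintype.card V)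
    (hr : 100 * (100 * c * r) ≤ Fintype.card V)
    (hlarge : 10 * (k * (100 * c) ^ 2 * (100 * c)) ≤ Fintype.card V)
    (hV : 10000 ≤ Fintype.card V) (hD : 48 * Fintype.card V < 100 * D)
    (hDV : D < Fintype.card V) (hU : 2 * m ≤ #U + D + Fintype.card V + r)
    (hweak : ∀ v ∈ U, #(nbrsIn (G \ strongGraph G k) v U) ≤ e) :
    ∃ J : Finset V, #Jᶜ ≤ D ∧ (∀ u ∈ J, #(nbrsIn H u univ) ≤ 100 * c) ∧
      BlueListEmbeds H G J U (100 * c * e) := by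
  by_cases hma : 100 * m ≤ 145 * Fintype.card V
  · exact exists_blueListEmbeds_of_le hk hG hH hm (by lia) hmV hma he hr hlarge hV hD hDV hU
  · have : r ≤ 100 * c * r := Nat.le_mul_of_pos_left _ (by lia)
    have : 100 * c * (100 * c * e) ≤ 100 * c * (100 * c * (100 * c * e)) :=
      Nat.le_mul_of_pos_left _ (by lia)
    exact exists_blueListEmbeds_of_lt hk hodd hG hm hc hmc (by lia) (by lia) (by lia) hV hD hDV hU
      hweak

theorem blueEmbeds_univ_of_lt_card_nbrsIn_strongGraph [Fintype α] (hk : 5 ≤ k) (hodd : Odd k)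
    (hG : (cycleGraph k).Free G) (hH : H.Connected) (hm : degSum H univ = 2 * m) (hc : 8 ≤ c)
    (hN : 2 * m ≤ Fintype.card α)
    (hmV : 100 * c * Fintype.card V + Fintype.card V < 100 * c * m)
    (he : 100 * (100 * c * (100 * c * (100 * c * e))) ≤ Fintype.card V)
    (hW : 100 * (100 * c * #Wᶜ) ≤ Fintype.card V)
    (hlarge : 10 * (k * (100 * c) ^ 2 * (100 * c)) ≤ Fintype.card V)
    (hV : 10000 ≤ Fintype.card V)
    (hweak : ∀ v ∈ W, #(nbrsIn (G \ strongGraph G k) v W) ≤ e)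
    (hv₀ : #(nbrsIn (strongGraph G k) v₀ W) = D) (hD : Fintype.card α ≤ c * D)
    (hD' : 48 * Fintype.card V < 100 * D) (hDV : D < Fintype.card V) :
    BlueEmbeds H G univ univ := by
  have : Nonempty α := ⟨v₀⟩
  set I := nbrsIn (strongGraph G k) v₀ W
  have hI : G.IsIndepSet (I : Set α) := strongGraph.isIndepSet_nbrsIn (by lia) hodd hG v₀ W
  let B : Finset α := {b ∈ W | ∃ x ∈ I, (strongGraph G k).Adj x b}
  by_cases hBV : Fintype.card V ≤ #B
  · have hB := strongGraph.isIndepSet_second_nbrsIn hk hodd hG v₀ W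
    exact (blueEmbeds_of_isIndepSet hB hBV).mono (subset_univ B)
  let U := W \ (I ∪ B)
  have hUW : U ⊆ W := sdiff_subset
  have hIU : Disjoint I U := disjoint_sdiff.mono_left subset_union_left
  have hU : 2 * m ≤ #U + D + Fintype.card V + #Wᶜ := by
    have := le_card_sdiff (I ∪ B) W
    have := card_union_le I B
    have := card_add_card_compl W
    lia
  have hweakU (v) (hv : v ∈ W) : #(nbrsIn (G \ strongGraph G k) v U) ≤ e :=
    (card_le_card (nbrsIn_mono hUW)).trans (hweak v hv)
  have hIe (x) (hx : x ∈ I) : #(nbrsIn G x U) ≤ e := by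
    refine (card_le_card fun y hy => ?_).trans (hweakU x (nbrsIn_subset hx))
    obtain ⟨hyU, hxy⟩ := mem_nbrsIn.1 hy
    exact mem_nbrsIn.2 ⟨hyU, hxy, fun h => (mem_sdiff.1 hyU).2
      (mem_union_right _ (mem_filter.2 ⟨hUW hyU, x, hx, h⟩))⟩
  obtain ⟨J, hJD, hJdeg, hJ⟩ := exists_blueListEmbeds (by lia) hodd hG hH hm hc
    (by have := Nat.mul_le_mul_left c hDV.le; lia) hmV he hW hlarge hV hD' hDV hU
    fun v hv => hweakU v (hUW hv)
  exact (hJ.blueEmbeds_univ hJdeg hI hIU hIe (hJD.trans hv₀.ge)).mono (subset_univ _)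

end SparseWeakEdges

section ConnectedGraphs

variable {α : Type*} [Fintype α] {G : SimpleGraph α} {W : Finset α} {k l m c x y : ℕ}

theorem exists_subset_forall_mul_card_nbrsIn_le
    (hG : x * y * degSum G univ ≤ Fintype.card α ^ 2) :
    ∃ W : Finset α, x * #Wᶜ ≤ Fintype.card α ∧
      ∀ v ∈ W, y * #(nbrsIn G v univ) ≤ Fintype.card α := by
  rcases isEmpty_or_nonempty α with h | h
  · exact ⟨∅, by simp, by simp⟩
  refine ⟨({v | y * #(nbrsIn G v univ) ≤ Fintype.card α} : Finset α), ?_, by simp⟩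
  set W : Finset α := {v | y * #(nbrsIn G v univ) ≤ Fintype.card α} with hW
  have hWdeg : #Wᶜ * Fintype.card α ≤ y * degSum G univ := calc
    #Wᶜ * Fintype.card α ≤ ∑ v ∈ Wᶜ, y * #(nbrsIn G v univ) :=
      card_nsmul_le_sum _ _ _ fun v hv => by
        rw [Finset.mem_compl, hW, mem_filter_univ, not_le] at hv
        exact hv.le
    _ ≤ y * degSum G univ := by
      rw [degSum, mul_sum]
      exact sum_le_sum_of_subset (subset_univ _)
  refine Nat.le_of_mul_le_mul_left (c := Fintype.card α) ?_ Fintype.card_pos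
  nlinarith [Nat.mul_le_mul_left x hWdeg]

theorem card_sq_lt_mul_degSum (hW : 2 * c * #Wᶜ ≤ Fintype.card α)
    (hG : 2 * Fintype.card α ^ 2 < c * degSum G univ) :
    Fintype.card α ^ 2 < c * degSum G W := by
  have hcompl : ∑ v ∈ Wᶜ, #(nbrsIn G v univ) ≤ #Wᶜ * Fintype.card α :=
    sum_le_card_nsmul _ _ _ fun v _ => card_le_univ _
  have hsplit := degSum_univ_le_degSum_add G W
  nlinarith [Nat.mul_le_mul_left c hsplit, Nat.mul_le_mul_left (2 * c) hcompl,
    Nat.mul_le_mul_right (Fintype.card α) hW]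

theorem exists_isMaxOn_card_nbrsIn (hG : Fintype.card α ^ 2 < c * degSum G W) :
    ∃ v ∈ W, (∀ u ∈ W, #(nbrsIn G u W) ≤ #(nbrsIn G v W)) ∧
      Fintype.card α ≤ c * #(nbrsIn G v W) := by
  obtain ⟨v, hv, hmax⟩ := exists_max_image W (fun v => #(nbrsIn G v W))
    (nonempty_iff_ne_empty.2 fun h => by simp [h, degSum] at hG)
  refine ⟨v, hv, hmax, ?_⟩
  have hdeg : degSum G W ≤ Fintype.card α * #(nbrsIn G v W) :=
    (sum_le_card_nsmul _ _ _ hmax).trans (Nat.mul_le_mul_right _ (card_le_univ W))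
  refine Nat.le_of_mul_le_mul_left (c := Fintype.card α) ?_ (Fintype.card_pos_iff.2 ⟨v⟩)
  nlinarith [Nat.mul_le_mul_left c hdeg]

variable {V : Type*} [Fintype V] {H : SimpleGraph V}

theorem blueEmbeds_univ_of_sparse_weak_edges (hk : 5 ≤ k) (hodd : Odd k)
    (hG : (cycleGraph k).Free G) (hH : H.Connected) (hdeg : ∀ v, 0 < #(nbrsIn H v univ))
    (hm : degSum H univ = 2 * m) (hc : 8 ≤ c) (hN : 2 * m ≤ Fintype.card α)
    (hmV : 100 * c * Fintype.card V + Fintype.card V < 100 * c * m)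
    (hlarge : c * (1000 * (k * (100 * c) ^ 2 + 1) * (100 * c)) ≤ m)
    (hweak : 100 * c * (100 * c) * (100 * c * (100 * c) ^ 3) *
      degSum (G \ strongGraph G k) univ ≤ Fintype.card α ^ 2)
    (hdense : 2 * Fintype.card α ^ 2 < c * degSum (strongGraph G k) univ) :
    BlueEmbeds H G univ univ := by
  obtain ⟨W, hWc, hWweak⟩ := exists_subset_forall_mul_card_nbrsIn_le hweak
  obtain ⟨v₀, -, hmax, hND⟩ := exists_isMaxOn_card_nbrsIn
    (card_sq_lt_mul_degSum (W := W) (by nlinarith) hdense)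
  set D := #(nbrsIn (strongGraph G k) v₀ W) with hD
  by_cases hDV : Fintype.card V ≤ D
  · have : Nonempty α := ⟨v₀⟩
    exact (blueEmbeds_of_isIndepSet (strongGraph.isIndepSet_nbrsIn (by lia) hodd hG v₀ W)
      hDV).mono (subset_univ _)
  have hNV : Fintype.card α ≤ c * Fintype.card V :=
    hND.trans (Nat.mul_le_mul_left _ (by lia))
  have hc' : 0 < c := by lia
  have hV : 1000 * (k * (100 * c) ^ 2 + 1) * (100 * c) ≤ Fintype.card V :=
    Nat.le_of_mul_le_mul_left (by lia) hc'
  have hV' : 10000 ≤ Fintype.card V := by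
    have : 1000 * (100 * c) ≤ 1000 * (k * (100 * c) ^ 2 + 1) * (100 * c) :=
      Nat.mul_le_mul_right _ (by lia)
    lia
  set e := Fintype.card α / (100 * c * (100 * c) ^ 3) with he
  have hWe (v) (hv : v ∈ W) : #(nbrsIn (G \ strongGraph G k) v W) ≤ e := by
    refine (card_le_card (nbrsIn_mono (subset_univ _))).trans ?_
    rw [he, Nat.le_div_iff_mul_le (by positivity), mul_comm]
    exact hWweak v hv
  have heV : 100 * (100 * c * (100 * c * (100 * c * e))) ≤ Fintype.card V := by
    refine Nat.le_of_mul_le_mul_left (c := c) ?_ hc'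
    have := Nat.mul_div_le (Fintype.card α) (100 * c * (100 * c) ^ 3)
    lia
  have hWV : 100 * (100 * c * #Wᶜ) ≤ Fintype.card V :=
    Nat.le_of_mul_le_mul_left (c := c) (by lia) hc'
  by_cases hD48 : 100 * D ≤ 48 * Fintype.card V
  · have hce : c * e ≤ 100 * c * (100 * c * (100 * c * e)) := by
      nlinarith [Nat.le_mul_of_pos_left (c * e) (show 0 < 100 * c * (100 * c) * 100 by positivity)]
    exact blueEmbeds_univ_of_card_nbrsIn_strongGraph_le (by lia) hodd hG hdeg hm (by lia)
      (by nlinarith) hN (by lia) (by nlinarith) hWe hmax hD.symm hND hD48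
  · exact blueEmbeds_univ_of_lt_card_nbrsIn_strongGraph hk hodd hG hH hm hc hN hmV heV hWV
      (by nlinarith) hV' hWe hD.symm hND (by lia) (by lia)

theorem exists_forall_connected_blueEmbeds_univ.{u, v} (hk : 6 ≤ k) (hodd : Odd k) (hl : 3 ≤ l) :
    ∃ m₁ : ℕ, ∀ (V : Type u) (α : Type v) [Fintype V] [Fintype α] (H : SimpleGraph V)
      (G : SimpleGraph α) (m : ℕ), (cycleGraph k).Free G → H.Connected →
      (∀ v, 0 < #(nbrsIn H v univ)) → degSum H univ = 2 * m → m₁ ≤ m →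
      Fintype.card α = 2 * m + l → BlueEmbeds H G univ univ := by
  obtain ⟨g, hg⟩ : ∃ g, g = 256 * (16 * k * (4 * k + 2) + 1) := ⟨_, rfl⟩
  obtain ⟨c, hc⟩ : ∃ c, c = 8 * g := ⟨_, rfl⟩
  obtain ⟨w₀, hw₀⟩ : ∃ w₀, w₀ = 100 * c * (100 * c) * (100 * c * (100 * c) ^ 3) := ⟨_, rfl⟩
  obtain ⟨w, hw⟩ : ∃ w, w = w₀ + 2 * g := ⟨_, rfl⟩
  obtain ⟨M, hM⟩ : ∃ M, M = 1000 * (k * (100 * c) ^ 2 + 1) * (100 * c) := ⟨_, rfl⟩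
  refine ⟨8 * w * k + 2 * w * ((8 * w) ^ k * k.factorial * k) + c * M, ?_⟩
  intro V α _ _ H G m hG hH hdeg hm hlarge hN
  have hc8 : 8 ≤ c := by lia
  by_cases hsparse : g * degSum G univ ≤ Fintype.card α ^ 2
  · obtain ⟨S, I, D, hS, hIS, hI, hD, hSdeg⟩ :=
      exists_sparse_subset_with_isIndepSet hk hodd hG (hg ▸ hsparse)
    exact blueEmbeds_univ_of_sparse_subset hl hm (card_le_of_connected hH hm) hN hS hIS hI hD hSdeg
  have hweak : w * degSum (G \ strongGraph G k) univ ≤ Fintype.card α ^ 2 :=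
    mul_degSum_le_card_sq (t := k) (by lia) fun A B hA hB =>
      not_isCompleteBetween_sdiff_strongGraph (by lia) hA hB
  have hdense : 2 * Fintype.card α ^ 2 < c * degSum (strongGraph G k) univ := by
    have hsplit : degSum G univ ≤
        degSum (strongGraph G k) univ + degSum (G \ strongGraph G k) univ := by
      rw [degSum, degSum, degSum, ← sum_add_distrib]
      exact sum_le_sum fun v _ => card_nbrsIn_le_add_sdiff G _ v univ
    subst hc hw
    nlinarith [Nat.mul_le_mul_left g hsplit]
  by_cases hmV : 100 * c * m ≤ 100 * c * Fintype.card V + Fintype.card V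
  · refine blueEmbeds_univ_of_dense_strongGraph (by lia) hodd hG hH hm (by lia) hc8 hmV ?_
      hdense
    have hmV' : 4 * m ≤ 5 * Fintype.card V := by nlinarith
    have : 8 * M ≤ c * M := Nat.mul_le_mul_right _ (by lia)
    lia
  · refine blueEmbeds_univ_of_sparse_weak_edges (by lia) hodd hG hH hdeg hm hc8 (by lia)
      (by lia) (by rw [← hM]; lia) ?_ hdense
    rw [← hw₀]
    exact (Nat.mul_le_mul_right _ (by lia)).trans hweak

end ConnectedGraphs

section ClosedSets

variable {V α : Type*} {H : SimpleGraph V} {G : SimpleGraph α} {L : V → Finset α}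
  {J S T C : Finset V} {W W' : Finset α} {f : V → α}

/-- No edge of `H` leaves `J`, that is, `J` is a union of vertex sets of components of `H`. -/
def IsClosedUnderAdj (H : SimpleGraph V) (J : Finset V) : Prop :=
  ∀ ⦃u⦄, u ∈ J → ∀ ⦃v⦄, H.Adj u v → v ∈ J

theorem IsClosedUnderAdj.sdiff (hJ : IsClosedUnderAdj H J) (hC : IsClosedUnderAdj H C) :
    IsClosedUnderAdj H (J \ C) := fun _ hu _ huv =>
  have ⟨huJ, huC⟩ := mem_sdiff.1 hu
  mem_sdiff.2 ⟨hJ huJ huv, fun hv => huC (hC hv huv.symm)⟩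

theorem IsBlueEmbedding.blueEmbeds_image (hf : IsBlueEmbedding H G W L S f) (hT : T ⊆ S) :
    BlueEmbeds H G T (T.image f) :=
  ⟨f, {
    mem := fun _ hu => mem_image_of_mem f hu
    notMem := by simp
    injOn := hf.injOn.mono hT
    not_adj := fun u hu v hv => hf.not_adj u (hT hu) v (hT hv) }⟩

theorem IsBlueEmbedding.image_subset (hf : IsBlueEmbedding H G W L S f) : S.image f ⊆ W :=
  image_subset_iff.2 hf.mem

theorem BlueEmbeds.union (hS : BlueEmbeds H G S W) (hT : BlueEmbeds H G T W')
    (hST : Disjoint S T) (hWW' : Disjoint W W') (hSclosed : IsClosedUnderAdj H S) :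
    BlueEmbeds H G (S ∪ T) (W ∪ W') := by
  obtain ⟨f, hf⟩ := hS
  obtain ⟨g, hg⟩ := hT
  exact ⟨_, (hf.mono subset_union_left).piecewise (hg.mono subset_union_right) hST
    (fun u hu v hv => disjoint_iff_ne.1 hWW' _ (hf.mem u hu) _ (hg.mem v hv))
    fun u hu v hv huv => absurd hv (Finset.disjoint_left.1 hST (hSclosed hu huv))⟩

theorem BlueEmbeds.union_of_forall_card_le (hS : BlueEmbeds H G S W)
    (hT : ∀ W' : Finset α, #W ≤ #W' + #S → BlueEmbeds H G T W') (hST : Disjoint S T)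
    (hSclosed : IsClosedUnderAdj H S) : BlueEmbeds H G (S ∪ T) W := by
  obtain ⟨f, hf⟩ := hS
  have hcard : #W ≤ #(W \ S.image f) + #S := by
    have := card_sdiff_add_card_eq_card hf.image_subset
    have := card_image_le (s := S) (f := f)
    lia
  exact ((hf.blueEmbeds_image subset_rfl).union (hT _ hcard) hST disjoint_sdiff hSclosed).mono
    (union_subset hf.image_subset sdiff_subset)

theorem BlueEmbeds.insert_pair (hS : BlueEmbeds H G S W) (hSclosed : IsClosedUnderAdj H S)
    {u v : V} (hu : u ∉ S) (hv : v ∉ S) {x y : α} (hx : x ∉ W) (hy : y ∉ W) (hxy : x ≠ y)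
    (hadj : ¬ G.Adj x y) : BlueEmbeds H G (insert u (insert v S)) (insert x (insert y W)) := by
  have hpair : BlueEmbeds H G {u, v} {x, y} := by
    have : Nonempty α := ⟨x⟩
    refine blueEmbeds_of_isIndepSet ?_ ((card_pair hxy).symm ▸ card_le_two)
    rw [coe_pair, IsIndepSet, Set.pairwise_pair]
    exact fun _ => ⟨hadj, fun h => hadj h.symm⟩
  have := hS.union hpair (by simp [hu, hv]) (by simp [hx, hy]) hSclosed
  rwa [union_comm S, union_comm W, insert_union, insert_union, singleton_union,
    singleton_union] at this

end ClosedSets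

section Matchings

variable {V α : Type*} {H : SimpleGraph V} {G : SimpleGraph α} {L : V → Finset α} {k l : ℕ}
  {P S : Finset V} {W U T : Finset α} {f : V → α} {σ : V → V} {s u : V} {x y : α}

/-- `P` is a union of isolated edges of `H`, and `σ` exchanges the two ends of each of them. -/
structure IsMatchedBy (H : SimpleGraph V) (P : Finset V) (σ : V → V) : Prop where
  mem : ∀ v ∈ P, σ v ∈ P
  adj_iff : ∀ v ∈ P, ∀ w, H.Adj v w ↔ w = σ v

namespace IsMatchedBy

theorem adj (hσ : IsMatchedBy H P σ) (hu : u ∈ P) : H.Adj u (σ u) :=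
  (hσ.adj_iff u hu _).2 rfl

theorem apply_apply (hσ : IsMatchedBy H P σ) (hu : u ∈ P) : σ (σ u) = u :=
  ((hσ.adj_iff _ (hσ.mem u hu) u).1 (hσ.adj hu).symm).symm

theorem isClosedUnderAdj_iff (hσ : IsMatchedBy H P σ) (hS : S ⊆ P) :
    IsClosedUnderAdj H S ↔ ∀ u ∈ S, σ u ∈ S :=
  ⟨fun h _ hu => h hu (hσ.adj (hS hu)), fun h u hu v huv =>
    (hσ.adj_iff u (hS hu) v).1 huv ▸ h u hu⟩

theorem isClosedUnderAdj_insert (hσ : IsMatchedBy H P σ) (hS : S ⊆ P)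
    (hSclosed : IsClosedUnderAdj H S) (hu : u ∈ P) :
    IsClosedUnderAdj H (insert u (insert (σ u) S)) := by
  rw [hσ.isClosedUnderAdj_iff (insert_subset hu (insert_subset (hσ.mem u hu) hS))]
  have := (hσ.isClosedUnderAdj_iff hS).1 hSclosed
  simp +contextual [hσ.apply_apply hu, this]

theorem isClosedUnderAdj_erase (hσ : IsMatchedBy H P σ) (hSclosed : IsClosedUnderAdj H S)
    (hu : u ∈ P) :
    IsClosedUnderAdj H ((S.erase (σ u)).erase u) := by
  have hpair : IsClosedUnderAdj H {u, σ u} := by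
    rw [hσ.isClosedUnderAdj_iff (by simp [insert_subset_iff, hu, hσ.mem u hu])]
    simp [hσ.apply_apply hu]
  convert hSclosed.sdiff hpair using 1
  ext v
  simp only [mem_erase, mem_sdiff, mem_insert, mem_singleton, not_or]
  tauto

theorem exists_isBlueEmbedding_maximal [Nonempty α] (hσ : IsMatchedBy H P σ) (G : SimpleGraph α)
    (W : Finset α) : ∃ S ⊆ P, IsClosedUnderAdj H S ∧ BlueEmbeds H G S W ∧
      ∀ u ∈ P \ S, ¬ BlueEmbeds H G (insert u (insert (σ u) S)) W := by
  obtain ⟨S, hS, hmax⟩ := exists_max_image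
    {S ∈ P.powerset | IsClosedUnderAdj H S ∧ BlueEmbeds H G S W} card
    ⟨∅, mem_filter.2 ⟨by simp, by simp [IsClosedUnderAdj], fun _ => Classical.arbitrary α, .empty⟩⟩
  obtain ⟨hSP, hSclosed, hSW⟩ : S ⊆ P ∧ _ := by simpa using hS
  refine ⟨S, hSP, hSclosed, hSW, fun u hu hSu => ?_⟩
  obtain ⟨huP, huS⟩ := mem_sdiff.1 hu
  have hle := hmax (insert u (insert (σ u) S)) (by
    simp [hSu, hσ.isClosedUnderAdj_insert hSP hSclosed huP, insert_subset_iff, huP, hσ.mem u huP,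
      hSP])
  have hlt : #S < #(insert u (insert (σ u) S)) := card_lt_card
    ((ssubset_insert huS).trans_subset (insert_subset_insert u (subset_insert _ S)))
  lia

theorem apply_notMem (hσ : IsMatchedBy H P σ) (hSclosed : IsClosedUnderAdj H S) (hu : u ∈ P \ S) :
    σ u ∉ S := fun h =>
  have ⟨huP, huS⟩ := mem_sdiff.1 hu
  huS (hSclosed h (hσ.adj huP).symm)

theorem isClique_sdiff_image (hσ : IsMatchedBy H P σ) (hSclosed : IsClosedUnderAdj H S)
    (hf : IsBlueEmbedding H G W L S f) (hu : u ∈ P \ S)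
    (hmax : ¬ BlueEmbeds H G (insert u (insert (σ u) S)) W) :
    G.IsClique (W \ S.image f : Finset α) := by
  intro x hx y hy hxy
  obtain ⟨hxW, hxS⟩ := mem_sdiff.1 (mem_coe.1 hx)
  obtain ⟨hyW, hyS⟩ := mem_sdiff.1 (mem_coe.1 hy)
  by_contra hadj
  exact hmax (((hf.blueEmbeds_image subset_rfl).insert_pair hSclosed (mem_sdiff.1 hu).2
    (hσ.apply_notMem hSclosed hu) hxS hyS hxy hadj).mono
      (insert_subset hxW (insert_subset hyW hf.image_subset)))

-- Otherwise the pairs `f s, x` and `f (σ s), y` could host the edges `s, σ s` and `u, σ u`.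
theorem adj_or_adj_of_not_blueEmbeds (hσ : IsMatchedBy H P σ) (hS : S ⊆ P)
    (hSclosed : IsClosedUnderAdj H S) (hf : IsBlueEmbedding H G W L S f) (hu : u ∈ P \ S)
    (hmax : ¬ BlueEmbeds H G (insert u (insert (σ u) S)) W) (hs : s ∈ S)
    (hx : x ∈ W \ S.image f) (hy : y ∈ W \ S.image f) (hxy : x ≠ y) :
    G.Adj (f s) x ∨ G.Adj (f (σ s)) y := by
  by_contra! hadj
  obtain ⟨hxW, hxS⟩ := mem_sdiff.1 hx
  obtain ⟨hyW, hyS⟩ := mem_sdiff.1 hy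
  have hσs : σ s ∈ S := hSclosed hs (hσ.adj (hS hs))
  have hne : σ s ≠ s := (hσ.adj (hS hs)).ne'
  have hfx (t) (ht : t ∈ S) : f t ≠ x := fun h => hxS (h ▸ mem_image_of_mem f ht)
  have hfy (t) (ht : t ∈ S) : f t ≠ y := fun h => hyS (h ▸ mem_image_of_mem f ht)
  set S' := (S.erase (σ s)).erase s
  have hS'S : S' ⊆ S := (erase_subset _ _).trans (erase_subset _ _)
  have hfS' (t) (ht : t ∈ S) (htS' : t ∉ S') : f t ∉ S'.image f := fun h => by
    obtain ⟨t', ht', htt'⟩ := mem_image.1 h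
    exact htS' (hf.injOn (hS'S ht') ht htt' ▸ ht')
  have hxS' : x ∉ S'.image f := fun h => hxS (image_subset_image hS'S h)
  have hyS' : y ∉ S'.image f := fun h => hyS (image_subset_image hS'S h)
  have hSS' : insert s (insert (σ s) S') = S := by
    rw [insert_comm, insert_erase (mem_erase.2 ⟨hne.symm, hs⟩), insert_erase hσs]
  have hstep := (hf.blueEmbeds_image hS'S).insert_pair
    (hσ.isClosedUnderAdj_erase hSclosed (hS hs)) (u := s) (v := σ s) (by simp [S'])
    (by simp [S']) (hfS' s hs (by simp [S'])) hxS' (hfx s hs) hadj.1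
  rw [hSS'] at hstep
  refine hmax ((hstep.insert_pair hSclosed (mem_sdiff.1 hu).2 (hσ.apply_notMem hSclosed hu) ?_ ?_
    (hfy _ hσs) hadj.2).mono ?_)
  · simp [hfS' _ hσs, hfx _ hσs, hf.injOn.eq_iff hσs hs, hne, S']
  · simp [hyS', (hfy s hs).symm, hxy.symm]
  · simp only [insert_subset_iff, hf.mem _ hσs, hyW, hf.mem s hs, hxW, true_and]
    exact (image_subset_image hS'S).trans hf.image_subset

end IsMatchedBy

theorem exists_subset_forall_erase {ι β : Type*} {r : ι → β → Prop} {σ : ι → ι} {S : Finset ι}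
    {U : Finset β} (hσ : ∀ s ∈ S, σ s ∈ S) (hσσ : ∀ s ∈ S, σ (σ s) = s)
    (hr : ∀ s ∈ S, ∀ x ∈ U, ∀ y ∈ U, x ≠ y → r s x ∨ r (σ s) y) (hU : U.Nonempty)
    (hcard : 2 * (#U * l) ≤ #S) :
    ∃ x ∈ U, ∃ F ⊆ S, l ≤ #F ∧ ∀ s ∈ F, ∀ y ∈ U.erase x, r s y := by
  obtain ⟨x₀, hx₀⟩ := hU
  let A : Finset ι := {s ∈ S | ∃ x ∈ U, ∀ y ∈ U.erase x, r s y}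
  have hor (s) (hs : s ∈ S) : s ∈ A ∨ σ s ∈ A := by
    by_contra! h
    simp only [A, mem_filter, hs, hσ s hs, true_and] at h
    push Not at h
    obtain ⟨h, hσs⟩ := h
    obtain ⟨y₁, hy₁, hr₁⟩ := h x₀ hx₀
    obtain ⟨y₂, hy₂, hr₂⟩ := h y₁ (mem_of_mem_erase hy₁)
    obtain ⟨y, hy, hry⟩ := hσs x₀ hx₀
    obtain ⟨hne, hy₂⟩ := mem_erase.1 hy₂
    have := hr s hs y₁ (mem_of_mem_erase hy₁) y (mem_of_mem_erase hy)
    have := hr s hs y₂ hy₂ y (mem_of_mem_erase hy)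
    grind
  have hA : #S ≤ #A + #A := calc
    #S ≤ #(A ∪ A.image σ) := card_le_card fun s hs => mem_union.2 <| (hor s hs).imp_right
      fun h => mem_image.2 ⟨σ s, h, hσσ s hs⟩
    _ ≤ #A + #A := (card_union_le _ _).trans (Nat.add_le_add_left card_image_le _)
  have : Nonempty β := ⟨x₀⟩
  choose! g hgU hg using fun s (hs : s ∈ A) => (mem_filter.1 hs).2
  obtain ⟨x, hx, hfib⟩ :=
    exists_le_card_fiber_of_mul_le_card_of_maps_to (s := A) (t := U) (n := l) hgU ⟨x₀, hx₀⟩ (by lia)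
  refine ⟨x, hx, {s ∈ A | g s = x}, (filter_subset _ _).trans (filter_subset _ _), hfib,
    fun s hs => ?_⟩
  obtain ⟨hsA, rfl⟩ := mem_filter.1 hs
  exact hg s hsA

theorem not_cycleGraph_free_of_isClique (hl : 1 ≤ l) (hU : G.IsClique (U : Set α))
    (hTU : G.IsCompleteBetween U T) (hUl : l + 1 ≤ #U) (hTl : l ≤ #T) :
    ¬ (cycleGraph (2 * l + 1)).Free G := fun hG => by
  obtain ⟨b, hb⟩ : U.Nonempty := card_pos.1 (by lia)
  obtain ⟨a, ha⟩ : (U.erase b).Nonempty := card_pos.1 (by rw [card_erase_of_mem hb]; lia)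
  obtain ⟨c, hc⟩ : T.Nonempty := card_pos.1 (by lia)
  obtain ⟨p, hp, hlen, hpUT⟩ := exists_isPath_of_isCompleteBetween (A := U.erase b) (B := T)
    (j := l - 1) (fun x hx y hy => hTU (mem_of_mem_erase hx) hy) ha hc
    (by rw [card_erase_of_mem hb]; lia) (by lia)
  have hbp : b ∉ p.support := fun h =>
    (mem_union.1 (hpUT b h)).elim (notMem_erase b U) fun hbT => (hTU hb hbT).ne rfl
  obtain ⟨hab, ha⟩ := mem_erase.1 ha
  exact not_adj_of_isPath_of_cycleGraph_free (by lia) hG (hp.cons (h := hU hb ha hab.symm) hbp)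
    (by rw [Walk.length_cons]; lia) (hTU hb hc).symm

theorem card_lt_of_isClique (hk : 3 ≤ k) (hG : (cycleGraph k).Free G)
    (hU : G.IsClique (U : Set α)) : #U < 4 * k := by
  by_contra! hcard
  obtain ⟨I, hIU, hI, hIcard⟩ := exists_isIndepSet_card_eq (r := 2) (Q := U) hk hG (by lia)
  obtain ⟨x, y, hxy, rfl⟩ := card_eq_two.1 hIcard
  exact hI (by simp) (by simp) hxy (hU (hIU (by simp)) (hIU (by simp)) hxy)

theorem IsMatchedBy.blueEmbeds [Nonempty α] (hσ : IsMatchedBy H P σ) (hl : 1 ≤ l)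
    (hG : (cycleGraph (2 * l + 1)).Free G)
    (hP : 4 * (2 * l + 1) + 2 * ((l + 2) * l) ≤ #P) (hW : #P + l ≤ #W) : BlueEmbeds H G P W := by
  obtain ⟨S, hSP, hSclosed, hS, hmax⟩ := hσ.exists_isBlueEmbedding_maximal G W
  rcases hSP.eq_or_ssubset with rfl | hSP'
  · exact hS
  obtain ⟨u, huP, huS⟩ := exists_of_ssubset hSP'
  have hu := mem_sdiff.2 ⟨huP, huS⟩
  obtain ⟨f, hf⟩ := hS
  have hcl := hσ.isClique_sdiff_image hSclosed hf hu (hmax u hu)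
  have hUlt := card_lt_of_isClique (by lia) hG hcl
  have hUcard : #(W \ S.image f) + #S = #W := by
    rw [← card_image_of_injOn hf.injOn]
    exact card_sdiff_add_card_eq_card hf.image_subset
  have hScard : #S + 2 ≤ #P := by
    have := card_le_card (insert_subset huP (insert_subset (hσ.mem u huP) hSP))
    rwa [card_insert_of_notMem, card_insert_of_notMem (hσ.apply_notMem hSclosed hu)] at this
    simp [huS, (hσ.adj huP).ne]
  obtain ⟨U, hUW, hU⟩ := exists_subset_card_eq (s := W \ S.image f) (n := l + 2) (by lia)
  obtain ⟨x, hx, F, hFS, hF, hFU⟩ := exists_subset_forall_erase (l := l)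
    (r := fun s y => G.Adj (f s) y) (hσ.isClosedUnderAdj_iff hSP |>.1 hSclosed)
    (fun s hs => hσ.apply_apply (hSP hs))
    (fun s hs x hx y hy => hσ.adj_or_adj_of_not_blueEmbeds hSP hSclosed hf hu (hmax u hu) hs
      (hUW hx) (hUW hy)) (card_pos.1 (by lia)) (by rw [hU]; lia)
  refine absurd hG (not_cycleGraph_free_of_isClique (U := U.erase x) (T := F.image f) hl
    (hcl.subset (coe_subset.2 ((erase_subset _ _).trans hUW))) ?_
    (by rw [card_erase_of_mem hx]; lia) ?_)
  · intro y hy z hz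
    obtain ⟨s, hs, rfl⟩ := mem_image.1 hz
    exact (hFU s hs y hy).symm
  · rwa [card_image_of_injOn (hf.injOn.mono (coe_subset.2 hFS))]

end Matchings

section Arrows

universe u

variable {V : Type u} {H : SimpleGraph V} {J J' : Finset V} {k N N' : ℕ}

/-- A local form of `R(C_k, H[J]) ≤ N`: in every set of at least `N` vertices of a graph without
`k`-cycles there is a copy of `H[J]` in the complement. -/
def Arrows (k : ℕ) (H : SimpleGraph V) (J : Finset V) (N : ℕ) : Prop :=
  ∀ (α : Type u) [Nonempty α] (G : SimpleGraph α), (cycleGraph k).Free G →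
    ∀ W : Finset α, N ≤ #W → BlueEmbeds H G J W

theorem Arrows.mono (h : Arrows k H J N) (hN : N ≤ N') : Arrows k H J N' :=
  fun α _ G hG W hW => h α G hG W (hN.trans hW)

theorem Arrows.union (hJ : Arrows k H J N) (hJ' : Arrows k H J' N') (hd : Disjoint J J')
    (hclosed : IsClosedUnderAdj H J) : Arrows k H (J ∪ J') (max N (N' + #J)) :=
  fun α _ G hG W hW =>
    (hJ α G hG W (by lia)).union_of_forall_card_le (fun W' hW' => hJ' α G hG W' (by lia)) hd hclosed

theorem arrows_empty : Arrows k H ∅ N :=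
  fun _ _ _ _ _ _ => ⟨fun _ => Classical.arbitrary _, .empty⟩

theorem arrows_mul_card_sq (hk : 3 ≤ k) (H : SimpleGraph V) (J : Finset V) :
    Arrows k H J (k * #J ^ 2) := by
  intro α _ G hG W hW
  obtain ⟨I, hIW, hI, hcard⟩ := exists_isIndepSet_card_eq hk hG hW
  exact (blueEmbeds_of_isIndepSet hI hcard.ge).mono hIW

end Arrows

section InducedSubgraphs

variable {V α : Type*} {H : SimpleGraph V} {G : SimpleGraph α} {J S T R : Finset V}
  {W : Finset α}

theorem BlueEmbeds.of_induce [Nonempty α]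
    (h : BlueEmbeds (H.induce (J : Set V)) (G.induce (W : Set α)) univ univ) :
    BlueEmbeds H G J W := by
  obtain ⟨f, hf⟩ := h
  refine ⟨fun u => if hu : u ∈ J then f ⟨u, hu⟩ else Classical.arbitrary α, ?_, by simp, ?_, ?_⟩
  · intro u hu
    simp [hu]
  · intro u hu v hv huv
    rw [mem_coe] at hu hv
    simp only [hu, hv, dif_pos] at huv
    exact congrArg Subtype.val (hf.injOn (mem_coe.2 (mem_univ _)) (mem_coe.2 (mem_univ _))
      (Subtype.ext huv))
  · intro u hu v hv huv
    simp only [hu, hv, dif_pos]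
    exact hf.not_adj ⟨u, hu⟩ (mem_univ _) ⟨v, hv⟩ (mem_univ _) huv

theorem card_nbrsIn_induce (u : (J : Set V)) :
    #(nbrsIn (H.induce (J : Set V)) u univ) = #(nbrsIn H u J) := by
  refine card_bij (fun x _ => x.1) (fun x hx => ?_) (fun x _ y _ h => Subtype.ext h) fun x hx => ?_
  · exact mem_nbrsIn.2 ⟨x.2, (mem_nbrsIn.1 hx).2⟩
  · obtain ⟨hxJ, hux⟩ := mem_nbrsIn.1 hx
    exact ⟨⟨x, hxJ⟩, mem_nbrsIn.2 ⟨mem_univ _, hux⟩, rfl⟩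

theorem degSum_induce : degSum (H.induce (J : Set V)) univ = degSum H J := by
  simp only [degSum, card_nbrsIn_induce]
  exact sum_coe_sort J fun u => #(nbrsIn H u J)

theorem degSum_union (hST : Disjoint S T) (hS : IsClosedUnderAdj H S) :
    degSum H (S ∪ T) = degSum H S + degSum H T := by
  rw [degSum, sum_union hST]
  refine congrArg₂ _ (sum_congr rfl fun u hu => ?_) (sum_congr rfl fun u hu => ?_) <;>
    refine congrArg card (Finset.ext fun v => ?_) <;>
    rw [mem_nbrsIn, mem_nbrsIn, mem_union]
  · exact and_congr_left fun huv => or_iff_left_of_imp fun _ => hS hu huv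
  · exact and_congr_left fun huv => or_iff_right fun hv =>
      Finset.disjoint_left.1 hST (hS hv huv.symm) hu

theorem four_mul_card_le_three_mul_degSum (hpos : ∀ v ∈ R, 0 < #(nbrsIn H v R))
    (hleaf : ∀ v ∈ R, #(nbrsIn H v R) = 1 → ∃ w ∈ nbrsIn H v R, 2 ≤ #(nbrsIn H w R)) :
    4 * #R ≤ 3 * degSum H R := by
  let B : Finset V := {v ∈ R | 2 ≤ #(nbrsIn H v R)}
  let L : Finset V := {v ∈ R | ¬ 2 ≤ #(nbrsIn H v R)}
  have hcard : #B + #L = #R := card_filter_add_card_filter_not _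
  have hsum : ∑ v ∈ B, #(nbrsIn H v R) + ∑ v ∈ L, #(nbrsIn H v R) = degSum H R :=
    sum_filter_add_sum_filter_not _ _ _
  have hL : #L • 1 ≤ ∑ v ∈ L, #(nbrsIn H v R) :=
    card_nsmul_le_sum _ _ _ fun v hv => hpos v (mem_filter.1 hv).1
  have hB : #B • 2 ≤ ∑ v ∈ B, #(nbrsIn H v R) :=
    card_nsmul_le_sum _ _ _ fun v hv => (mem_filter.1 hv).2
  have hLB : #L ≤ ∑ v ∈ B, #(nbrsIn H v R) := by
    refine (card_le_card fun v hv => ?_).trans card_biUnion_le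
    obtain ⟨hvR, hv⟩ := mem_filter.1 hv
    obtain ⟨w, hw, hwR⟩ := hleaf v hvR (by have := hpos v hvR; lia)
    obtain ⟨hwJ, hvw⟩ := mem_nbrsIn.1 hw
    exact mem_biUnion.2 ⟨w, mem_filter.2 ⟨hwJ, hwR⟩, mem_nbrsIn.2 ⟨hvR, hvw.symm⟩⟩
  simp only [smul_eq_mul] at hL hB
  lia

theorem IsMatchedBy.degSum_eq_card {σ : V → V} (hσ : IsMatchedBy H J σ) : degSum H J = #J := by
  rw [degSum, card_eq_sum_ones]
  refine sum_congr rfl fun u hu => card_eq_one.2 ⟨σ u, ?_⟩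
  ext v
  rw [mem_nbrsIn, mem_singleton, hσ.adj_iff u hu]
  exact and_iff_right_of_imp fun h => h ▸ hσ.mem u hu

variable [Fintype V]

theorem IsClosedUnderAdj.nbrsIn_eq (hJ : IsClosedUnderAdj H J) {u : V} (hu : u ∈ J) :
    nbrsIn H u J = nbrsIn H u univ :=
  (nbrsIn_mono (subset_univ J)).antisymm fun _ hv =>
    have huv := (mem_nbrsIn.1 hv).2
    mem_nbrsIn.2 ⟨hJ hu huv, huv⟩

theorem IsClosedUnderAdj.card_le_degSum (hJ : IsClosedUnderAdj H J)
    (hdeg : ∀ v, 0 < #(nbrsIn H v univ)) : #J ≤ degSum H J := by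
  simpa using card_mul_le_degSum (d := 1) (subset_refl J) fun u hu => hJ.nbrsIn_eq hu ▸ hdeg u

theorem isMatchedBy_filter_card_nbrsIn_eq_one {σ : V → V} (hσ : ∀ v, H.Adj v (σ v)) :
    IsMatchedBy H {v | #(nbrsIn H v univ) = 1 ∧ #(nbrsIn H (σ v) univ) = 1} σ := by
  have eq_of_adj {v w : V} (hv : #(nbrsIn H v univ) = 1) (hvw : H.Adj v w) : w = σ v :=
    card_le_one.1 hv.le _ (mem_nbrsIn.2 ⟨mem_univ _, hvw⟩) _ (mem_nbrsIn.2 ⟨mem_univ _, hσ v⟩)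
  refine ⟨fun v hv => ?_, fun v hv w => ?_⟩ <;>
    obtain ⟨hv, hσv⟩ := (mem_filter.1 hv).2
  · refine mem_filter.2 ⟨mem_univ _, hσv, ?_⟩
    rwa [← eq_of_adj hσv (hσ v).symm]
  · exact ⟨eq_of_adj hv, fun h => h ▸ hσ v⟩

end InducedSubgraphs

section Components

universe u

variable {V : Type u} [Fintype V] {H : SimpleGraph V} {J : Finset V} {k l m K : ℕ}

theorem isClosedUnderAdj_toFinset_supp (C : H.ConnectedComponent) :
    IsClosedUnderAdj H C.supp.toFinset := fun _ hu _ huv =>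
  Set.mem_toFinset.2 (C.mem_supp_of_adj_mem_supp (Set.mem_toFinset.1 hu) huv)

theorem IsClosedUnderAdj.toFinset_supp_subset (hJ : IsClosedUnderAdj H J) {u : V} (hu : u ∈ J) :
    (H.connectedComponentMk u).supp.toFinset ⊆ J := fun v hv => by
  rw [Set.mem_toFinset, ConnectedComponent.mem_supp_iff, ConnectedComponent.eq] at hv
  obtain ⟨p⟩ := hv.symm
  induction p with
  | nil => exact hu
  | cons h p ih => exact ih (hJ hu h) p.reachable.symm

theorem IsClosedUnderAdj.induction {motive : Finset V → Prop} (hJ : IsClosedUnderAdj H J)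
    (empty : motive ∅)
    (union : ∀ (J : Finset V) (C : H.ConnectedComponent), IsClosedUnderAdj H J →
      Disjoint J C.supp.toFinset → motive J → motive (J ∪ C.supp.toFinset)) : motive J := by
  induction J using Finset.strongInduction with
  | H J ih =>
    rcases J.eq_empty_or_nonempty with rfl | ⟨u, hu⟩
    · exact empty
    have hC := hJ.toFinset_supp_subset hu
    have hrest := hJ.sdiff (isClosedUnderAdj_toFinset_supp (H.connectedComponentMk u))
    have := union _ _ hrest sdiff_disjoint
      (ih _ (sdiff_ssubset hC ⟨u, by simp⟩) hrest)
    rwa [sdiff_union_of_subset hC] at this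

theorem exists_forall_arrows_toFinset_supp (hk : 6 ≤ k) (hodd : Odd k) (hl : 3 ≤ l) :
    ∃ m₁ : ℕ, ∀ (V : Type u) [Fintype V] (H : SimpleGraph V), (∀ v, 0 < #(nbrsIn H v univ)) →
      ∀ C : H.ConnectedComponent, m₁ ≤ degSum H C.supp.toFinset →
        Arrows k H C.supp.toFinset (degSum H C.supp.toFinset + l) := by
  obtain ⟨m₁, hm₁⟩ := exists_forall_connected_blueEmbeds_univ.{u, u} hk hodd hl
  refine ⟨2 * m₁, fun V _ H hdeg C hC α _ G hG W hW => ?_⟩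
  obtain ⟨W', hW', hcard⟩ := exists_subset_card_eq hW
  set J : Finset V := C.supp.toFinset with hJ
  have hconn : (H.induce (J : Set V)).Connected := by
    rw [hJ, Set.coe_toFinset]
    exact C.maximal_connected_induce_supp.prop
  have hsum := degSum_univ (H.induce (J : Set V))
  refine (BlueEmbeds.of_induce ?_).mono hW'
  refine hm₁ _ _ _ _ _ (fun h => hG (h.trans ⟨(Embedding.induce _).toCopy⟩)) hconn ?_ hsum ?_ ?_
  · intro u
    rw [card_nbrsIn_induce, (isClosedUnderAdj_toFinset_supp C).nbrsIn_eq u.2]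
    exact hdeg _
  · rw [degSum_induce] at hsum
    lia
  · rw [← hsum, degSum_induce, ← hcard]
    simp

theorem IsClosedUnderAdj.arrows_degSum_add (hk : 3 ≤ k) (hdeg : ∀ v, 0 < #(nbrsIn H v univ))
    (hlarge : ∀ C : H.ConnectedComponent, m ≤ degSum H C.supp.toFinset →
      Arrows k H C.supp.toFinset (degSum H C.supp.toFinset + l)) (hJ : IsClosedUnderAdj H J) :
    Arrows k H J (degSum H J + (l + k * m ^ 2)) := by
  refine hJ.induction (motive := fun J => Arrows k H J (degSum H J + (l + k * m ^ 2)))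
    arrows_empty fun J C hJ hd ih => ?_
  have hC := isClosedUnderAdj_toFinset_supp C
  have hsum := degSum_union hd hJ
  have hJcard := hJ.card_le_degSum hdeg
  have hCarrows :
      Arrows k H C.supp.toFinset (degSum H C.supp.toFinset + (l + k * m ^ 2)) := by
    by_cases h : m ≤ degSum H C.supp.toFinset
    · exact (hlarge C h).mono (by lia)
    · have hsq : k * #C.supp.toFinset ^ 2 ≤ k * m ^ 2 := by
        have := hC.card_le_degSum hdeg
        gcongr
        lia
      exact (arrows_mul_card_sq hk H _).mono (by lia)
  exact (ih.union hCarrows hd hJ).mono (by lia)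

theorem IsClosedUnderAdj.arrows_card_add (hk : 3 ≤ k)
    (hK : ∀ C : H.ConnectedComponent, #C.supp.toFinset ≤ K) (hJ : IsClosedUnderAdj H J) :
    Arrows k H J (#J + k * K ^ 2) := by
  refine hJ.induction (motive := fun J => Arrows k H J (#J + k * K ^ 2)) arrows_empty
    fun J C hJ hd ih => ?_
  have hsq : k * #C.supp.toFinset ^ 2 ≤ k * K ^ 2 := by
    gcongr
    exact hK C
  have := card_union_of_disjoint hd
  exact (ih.union (arrows_mul_card_sq hk H _) hd hJ).mono (by lia)

theorem isClosedUnderAdj_univ : IsClosedUnderAdj H univ := fun _ _ v _ => mem_univ v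

theorem arrows_univ_of_le_degSum_component (hk : 3 ≤ k) (hdeg : ∀ v, 0 < #(nbrsIn H v univ))
    (hlarge : ∀ C : H.ConnectedComponent, m ≤ degSum H C.supp.toFinset →
      Arrows k H C.supp.toFinset (degSum H C.supp.toFinset + l)) {C : H.ConnectedComponent}
    (hC : m + (l + k * m ^ 2) ≤ degSum H C.supp.toFinset) :
    Arrows k H univ (degSum H univ + l) := by
  have hrest : IsClosedUnderAdj H (univ \ C.supp.toFinset) :=
    isClosedUnderAdj_univ.sdiff (isClosedUnderAdj_toFinset_supp C)
  have hcard := hrest.card_le_degSum hdeg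
  have hsum := degSum_union sdiff_disjoint hrest
  have harrows := (hrest.arrows_degSum_add hk hdeg hlarge).union (hlarge C (by lia)) sdiff_disjoint
    hrest
  rw [sdiff_union_of_subset (subset_univ _)] at hsum harrows
  exact harrows.mono (by lia)

-- As the average degree is close to 1, almost all edges of `H` are isolated.
theorem arrows_univ_of_degSum_le_card_add (hl : 1 ≤ l) (hdeg : ∀ v, 0 < #(nbrsIn H v univ))
    (hclosed : ∀ J, IsClosedUnderAdj H J → Arrows (2 * l + 1) H J (degSum H J + m))
    (hK : degSum H univ ≤ Fintype.card V + K)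
    (hsum : 4 * K + m + 4 * (2 * l + 1) + 2 * ((l + 2) * l) ≤ degSum H univ) :
    Arrows (2 * l + 1) H univ (degSum H univ + l) := by
  have hpartner (v : V) : ∃ w, H.Adj v w :=
    (card_pos.1 (hdeg v)).imp fun _ hw => (mem_nbrsIn.1 hw).2
  choose σ hσ using hpartner
  set P : Finset V := {v | #(nbrsIn H v univ) = 1 ∧ #(nbrsIn H (σ v) univ) = 1} with hP
  have hmatched : IsMatchedBy H P σ := isMatchedBy_filter_card_nbrsIn_eq_one hσ
  have hPclosed := (hmatched.isClosedUnderAdj_iff subset_rfl).2 hmatched.mem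
  have hR : IsClosedUnderAdj H (univ \ P) := isClosedUnderAdj_univ.sdiff hPclosed
  have hRdeg : 4 * #(univ \ P) ≤ 3 * degSum H (univ \ P) := by
    refine four_mul_card_le_three_mul_degSum (fun v hv => hR.nbrsIn_eq hv ▸ hdeg v) ?_
    intro v hv hv1
    have hσv : σ v ∈ univ \ P := hR hv (hσ v)
    refine ⟨σ v, mem_nbrsIn.2 ⟨hσv, hσ v⟩, ?_⟩
    rw [hR.nbrsIn_eq hv] at hv1
    rw [hR.nbrsIn_eq hσv]
    have hne : #(nbrsIn H (σ v) univ) ≠ 1 := fun h => (mem_sdiff.1 hv).2 (by simp [hP, hv1, h])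
    have := hdeg (σ v)
    lia
  have hRcard := hR.card_le_degSum hdeg
  have hPsum := hmatched.degSum_eq_card
  have hsplit := degSum_union sdiff_disjoint hR
  have hcard := card_sdiff_add_card_eq_card (subset_univ P)
  rw [sdiff_union_of_subset (subset_univ _)] at hsplit
  rw [card_univ] at hcard
  intro α _ G hG W hW
  rw [← sdiff_union_of_subset (subset_univ P)]
  exact (hclosed _ hR α G hG W (by lia)).union_of_forall_card_le
    (fun W' hW' => hmatched.blueEmbeds hl hG (by lia) (by lia)) sdiff_disjoint hR

theorem exists_forall_arrows_univ (hl : 3 ≤ l) : ∃ M : ℕ, ∀ (V : Type u) [Fintype V]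
    (H : SimpleGraph V), (∀ v, 0 < #(nbrsIn H v univ)) → M ≤ degSum H univ →
      Arrows (2 * l + 1) H univ (degSum H univ + l) := by
  obtain ⟨m, hm⟩ := exists_forall_arrows_toFinset_supp.{u} (k := 2 * l + 1) (by lia) ⟨l, rfl⟩ hl
  obtain ⟨c, hc⟩ : ∃ c, c = l + (2 * l + 1) * m ^ 2 := ⟨_, rfl⟩
  obtain ⟨K, hK⟩ : ∃ K, K = (2 * l + 1) * (m + c) ^ 2 := ⟨_, rfl⟩
  refine ⟨4 * K + c + 4 * (2 * l + 1) + 2 * ((l + 2) * l), fun V _ H hdeg hM => ?_⟩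
  by_cases hbig : ∃ C : H.ConnectedComponent, m + c ≤ degSum H C.supp.toFinset
  · obtain ⟨C, hC⟩ := hbig
    exact arrows_univ_of_le_degSum_component (by lia) hdeg (hm V H hdeg) (hc ▸ hC)
  push Not at hbig
  have hsmall (C : H.ConnectedComponent) : #C.supp.toFinset ≤ m + c :=
    ((isClosedUnderAdj_toFinset_supp C).card_le_degSum hdeg).trans (hbig C).le
  rcases le_total (Fintype.card V + K) (degSum H univ) with hV | hV
  · have := isClosedUnderAdj_univ.arrows_card_add (k := 2 * l + 1) (by lia) hsmall
    rw [card_univ, ← hK] at this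
    exact this.mono (by lia)
  · exact arrows_univ_of_degSum_le_card_add (by lia) hdeg
      (fun J hJ => hc ▸ hJ.arrows_degSum_add (by lia) hdeg (hm V H hdeg)) hV hM

end Components

section Copies

variable {α β : Type*} {A : SimpleGraph α} {B : SimpleGraph β}

theorem hasCopy_of_not_free (h : ¬ A.Free B) : HasCopy A B := by
  obtain ⟨φ⟩ := not_not.1 h
  exact ⟨φ.toHom, φ.injective⟩

theorem BlueEmbeds.hasCopy_compl [Fintype α] {W : Finset β} (h : BlueEmbeds A B univ W) :
    HasCopy A Bᶜ := by
  obtain ⟨f, hf⟩ := h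
  have hinj : f.Injective := Set.injOn_univ.1 (coe_univ (α := α) ▸ hf.injOn)
  exact ⟨⟨f, fun huv => ⟨hinj.ne huv.ne, hf.not_adj _ (mem_univ _) _ (mem_univ _) huv⟩⟩, hinj⟩

end Copies

end Classical

theorem stmt_0 (k : ℕ) (hk : 7 ≤ k) (hodd : Odd k) :
    ∃ m₀ : ℕ, ∀ (V : Type) [Fintype V] [DecidableEq V] (H : SimpleGraph V)
      [DecidableRel H.Adj], (∀ v : V, 0 < H.degree v) → m₀ ≤ H.edgeFinset.card →
      ramseyNumber (SimpleGraph.cycleGraph k) H ≤ 2 * H.edgeFinset.card + (k - 1) / 2 := by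
  classical
  obtain ⟨l, rfl⟩ := hodd
  obtain ⟨M, hM⟩ := exists_forall_arrows_univ (l := l) (by lia)
  refine ⟨M, fun V _ _ H _ hdeg hm => Nat.sInf_le fun C => ?_⟩
  by_cases hC : (cycleGraph (2 * l + 1)).Free C
  · have hsum : degSum H univ = 2 * #H.edgeFinset := by convert degSum_univ H
    have hpos (v : V) : 0 < #(nbrsIn H v univ) := by
      obtain ⟨w, hw⟩ := (H.degree_pos_iff_exists_adj v).1 (hdeg v)
      exact card_pos.2 ⟨w, mem_nbrsIn.2 ⟨mem_univ w, hw⟩⟩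
    have : Nonempty (Fin (2 * #H.edgeFinset + (2 * l + 1 - 1) / 2)) := ⟨⟨0, by lia⟩⟩
    refine .inr (hM V H hpos (by lia) _ C hC univ ?_).hasCopy_compl
    rw [card_univ, Fintype.card_fin]
    lia
  · exact .inl (hasCopy_of_not_free hC)
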